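/- arXiv:2406.15850 — 9 statements merged into one kernel-verified Lean document; each statement's English description precedes it below -/
import Mathlib

section
/- Suppose for each o ∈ O there is a Markov kernel T̃_o : Z → P(S) such that T_o(s) = T̃_o(φ(s)) for every s ∈ S (i.e., φ is dynamics-preserving), and define abstract kernels T̄_o(z) := (T̃_o z).map φ ∈ P(Z). Then there exist an initial grounding G₀ : Z → P(S) and a transition grounding G : Z × O × Z → P(S) such that: (i) p₀ = (p₀.map φ).bind G₀ and G₀(z)(φ⁻¹{z}) = 1 for (p₀.map φ)-almost every z; (ii) for every z ∈ Z and o ∈ O, T̃_o(z) = ∫ G(z, o, z') d(T̄_o z)(z') and G(z, o, z')(φ⁻¹{z'}) = 1 for (T̄_o z)-almost every z'; and (iii) for every horizon t ≥ 0 and every option sequence (o₀, …, o_{t−1}), the grounded simulated distribution equals the ground future-state distribution: B̄_t(o₀, …, o_{t−1}) = B_t(o₀, …, o_{t−1}). -/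
open MeasureTheory ProbabilityTheory

/-- The ground future-state distribution `B_t(o₀, …, o_{t−1})`: the law of `(S₀, …, S_t)` of the
Markov chain with `S₀ ~ p₀` and `S_{i+1} ~ T_{o_i}(S_i)`. -/
noncomputable def groundLaw {S O : Type*} [MeasurableSpace S]
    (p₀ : Measure S) (T : O → Kernel S S) :
    (t : ℕ) → (Fin t → O) → Measure (Fin (t + 1) → S)
  | 0, _ => p₀.map (fun s => fun _ => s)
  | t + 1, os =>
      (groundLaw p₀ T t (fun i => os i.castSucc)).bind fun traj =>
        (T (os (Fin.last t)) (traj (Fin.last t))).map (fun s' => Fin.snoc traj s')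

/-- The joint law of the simulated abstract trajectory `(Z₀, …, Z_t)` and its grounding
`(S₀, …, S_t)`: `Z₀ ~ p₀.map φ`, `S₀ ~ G₀(Z₀)`, `Z_{i+1} ~ T̄_{o_i}(Z_i)`,
`S_{i+1} ~ G(Z_i, o_i, Z_{i+1})`, each draw conditionally independent of the past given the
indicated variables. -/
noncomputable def simLaw {S Z O : Type*} [MeasurableSpace S] [MeasurableSpace Z]
    [MeasurableSpace O]
    (p₀ : Measure S) (φ : S → Z) (Tbar : O → Kernel Z Z)
    (G₀ : Kernel Z S) (G : Kernel (Z × O × Z) S) :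
    (t : ℕ) → (Fin t → O) → Measure ((Fin (t + 1) → S) × (Fin (t + 1) → Z))
  | 0, _ =>
      (p₀.map φ).bind fun z => (G₀ z).map (fun s => (fun _ => s, fun _ => z))
  | t + 1, os =>
      (simLaw p₀ φ Tbar G₀ G t (fun i => os i.castSucc)).bind fun p =>
        (Tbar (os (Fin.last t)) (p.2 (Fin.last t))).bind fun z' =>
          (G (p.2 (Fin.last t), os (Fin.last t), z')).map
            (fun s' => (Fin.snoc p.1 s', Fin.snoc p.2 z'))

/-- The grounded simulated (future-state) distribution `B̄_t(o₀, …, o_{t−1})`: the marginal law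
of `(S₀, …, S_t)` under `simLaw`. -/
noncomputable def simGroundLaw {S Z O : Type*} [MeasurableSpace S] [MeasurableSpace Z]
    [MeasurableSpace O]
    (p₀ : Measure S) (φ : S → Z) (Tbar : O → Kernel Z Z)
    (G₀ : Kernel Z S) (G : Kernel (Z × O × Z) S)
    (t : ℕ) (os : Fin t → O) : Measure (Fin (t + 1) → S) :=
  (simLaw p₀ φ Tbar G₀ G t os).map Prod.fst

theorem aux_disint {α S Z : Type*} [MeasurableSpace α] [MeasurableSpace S] [StandardBorelSpace S]
    [Nonempty S] [MeasurableSpace Z] [StandardBorelSpace Z] (φ : S → Z) (hφ : Measurable φ)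
    (κ : Kernel α S) [IsMarkovKernel κ] :
    ∃ η : Kernel (α × Z) S, IsMarkovKernel η ∧ ∀ a (A : Set (Z × S)), MeasurableSet A →
      ∫⁻ z, η (a, z) {s | (z, s) ∈ A} ∂((κ a).map φ) = κ a {s | (φ s, s) ∈ A} := by
  have hm : Measurable (fun s : S => (φ s, s)) := hφ.prodMk measurable_id
  let ρ : Kernel α (Z × S) := κ.map (fun s => (φ s, s))
  have : IsMarkovKernel ρ := Kernel.IsMarkovKernel.map κ hm
  refine ⟨ρ.condKernel, inferInstance, fun a A hA => ?_⟩
  have h : (ρ.fst ⊗ₖ ρ.condKernel) a A = ρ a A := by rw [ρ.disintegrate ρ.condKernel]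
  rw [Kernel.compProd_apply hA, Kernel.fst_apply, Kernel.map_apply _ hm,
    Measure.map_apply hm hA, Measure.map_map measurable_fst hm] at h
  exact h

/-- The fibre disintegration property. -/
def AuxGood {S Z : Type*} [MeasurableSpace S] [MeasurableSpace Z] (φ : S → Z)
    (μ : Measure S) (η : Kernel Z S) : Prop :=
  ∀ (A : Set (Z × S)), MeasurableSet A →
      ∫⁻ z, η z {s | (z, s) ∈ A} ∂(μ.map φ) = μ {s | (φ s, s) ∈ A}

theorem aux_meas {α β γ : Type*} [MeasurableSpace α] [MeasurableSpace β] [MeasurableSpace γ]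
    (κ : Kernel α β) [IsSFiniteKernel κ] (f : α → β → γ)
    (hf : Measurable (fun p : α × β => f p.1 p.2)) :
    Measurable (fun a => (κ a).map (f a)) := by
  refine Measure.measurable_of_measurable_coe _ fun s hs => ?_
  have : (fun a => (κ a).map (f a) s) = fun a => κ a (Prod.mk a ⁻¹' {p : α × β | f p.1 p.2 ∈ s}) := by
    funext a
    have hfa : Measurable (f a) := hf.comp measurable_prodMk_left
    rw [Measure.map_apply hfa hs]
    rfl
  rw [this]
  exact Kernel.measurable_kernel_prodMk_left (hf hs)

theorem aux_bind {S Z γ : Type*} [MeasurableSpace S] [MeasurableSpace Z] [MeasurableSpace γ]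
    (φ : S → Z) (hφ : Measurable φ) (μ : Measure S) (η : Kernel Z S) [IsMarkovKernel η]
    (h : AuxGood φ μ η) (f : Z → S → γ) (hf : Measurable (fun p : Z × S => f p.1 p.2)) :
    (μ.map φ).bind (fun z => (η z).map (f z)) = μ.map (fun s => f (φ s) s) := by
  ext s hs
  have hm : Measurable (fun s : S => (φ s, s)) := hφ.prodMk measurable_id
  have hff : Measurable (fun s => f (φ s) s) := hf.comp hm
  rw [Measure.bind_apply hs (aux_meas η f hf).aemeasurable, Measure.map_apply hff hs]
  have := h {p : Z × S | f p.1 p.2 ∈ s} (hf hs)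
  refine Eq.trans (lintegral_congr fun z => ?_) this
  have hfa : Measurable (f z) := hf.comp measurable_prodMk_left
  rw [Measure.map_apply hfa hs]
  rfl

theorem aux_supp {S Z : Type*} [MeasurableSpace S] [MeasurableSpace Z] [StandardBorelSpace Z]
    (φ : S → Z) (hφ : Measurable φ) (μ : Measure S) [IsProbabilityMeasure μ]
    (η : Kernel Z S) [IsMarkovKernel η] (h : AuxGood φ μ η) :
    ∀ᵐ z ∂(μ.map φ), η z (φ ⁻¹' {z}) = 1 := by
  have hA : MeasurableSet {p : Z × S | φ p.2 = p.1} :=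
    measurableSet_eq_fun (hφ.comp measurable_snd) measurable_fst
  have h1 := h _ hA.compl
  have h2 : {s : S | (φ s, s) ∈ {p : Z × S | φ p.2 = p.1}ᶜ} = ∅ := by ext; simp
  rw [h2, measure_empty] at h1
  replace h1 := (lintegral_eq_zero_iff (Kernel.measurable_kernel_prodMk_left hA.compl)).1 h1
  filter_upwards [h1] with z hz
  have : MeasurableSet (φ ⁻¹' {z}) := hφ (measurableSet_singleton z)
  rw [← prob_compl_eq_zero_iff this]
  exact hz

theorem aux_snoc {α X : Type*} [MeasurableSpace α] [MeasurableSpace X] {t : ℕ}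
    {f : α → (Fin (t + 1) → X)} {g : α → X} (hf : Measurable f) (hg : Measurable g) :
    Measurable (fun a => (Fin.snoc (f a) (g a) : Fin (t + 1 + 1) → X)) := by
  refine measurable_pi_lambda _ fun i => ?_
  refine Fin.lastCases ?_ (fun i => ?_) i
  · simpa using hg
  · simp only [Fin.snoc_castSucc]
    exact (measurable_pi_apply i).comp hf

theorem aux_bind_map {α β γ : Type*} [MeasurableSpace α] [MeasurableSpace β] [MeasurableSpace γ]
    (μ : Measure α) {f : α → β} (hf : Measurable f) {g : β → Measure γ} (hg : Measurable g) :
    (μ.map f).bind g = μ.bind (fun a => g (f a)) := by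
  rw [Measure.bind, Measure.bind, Measure.map_map hg hf]
  rfl

theorem aux_map_bind {α β γ : Type*} [MeasurableSpace α] [MeasurableSpace β] [MeasurableSpace γ]
    (μ : Measure α) {f : α → Measure β} (hf : Measurable f) {g : β → γ} (hg : Measurable g) :
    (μ.bind f).map g = μ.bind (fun a => (f a).map g) := by
  ext s hs
  have hfg : Measurable (fun a => (f a).map g) := (Measure.measurable_map g hg).comp hf
  rw [Measure.map_apply hg hs, Measure.bind_apply (hg hs) hf.aemeasurable,
    Measure.bind_apply hs hfg.aemeasurable]
  exact lintegral_congr fun a => (Measure.map_apply hg hs).symm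

theorem aux_sim {S Z O : Type*} [MeasurableSpace S] [MeasurableSpace Z]
    [MeasurableSpace O] 
    (p₀ : Measure S) (φ : S → Z) (hφ : Measurable φ)
    (T : O → Kernel S S) (hT : ∀ o, IsMarkovKernel (T o))
    (Ttil : O → Kernel Z S) (hTtil : ∀ o, IsMarkovKernel (Ttil o))
    (hdyn : ∀ o s, T o s = Ttil o (φ s))
    (G₀ : Kernel Z S) [IsMarkovKernel G₀] (G : Kernel (Z × O × Z) S) [IsMarkovKernel G]
    (h₀ : AuxGood φ p₀ G₀)
    (hG : ∀ z o, AuxGood φ (Ttil o z) (G.comap (fun z' => (z, o, z')) (by fun_prop)))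
    (t : ℕ) (os : Fin t → O) :
    simLaw p₀ φ (fun o => (Ttil o).map φ) G₀ G t os =
      (groundLaw p₀ T t os).map (fun s => (s, fun i => φ (s i))) := by
  have hh : ∀ n : ℕ, Measurable (fun s : Fin n → S => (s, fun i => φ (s i))) := fun n => by
    fun_prop
  induction t with
  | zero =>
    rw [simLaw, groundLaw, Measure.map_map (hh _) (by fun_prop)]
    exact aux_bind φ hφ p₀ G₀ h₀ (fun z s => (fun _ => s, fun _ => z)) (by fun_prop)
  | succ t ih =>
    rw [simLaw, groundLaw, ih]
    set o := os (Fin.last t)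
    have key : ∀ p : (Fin (t + 1) → S) × (Fin (t + 1) → Z),
        ((((Ttil o).map φ) (p.2 (Fin.last t))).bind fun z' =>
          (G (p.2 (Fin.last t), o, z')).map
            (fun s' => ((Fin.snoc p.1 s', Fin.snoc p.2 z') :
              (Fin (t + 1 + 1) → S) × (Fin (t + 1 + 1) → Z)))) =
        ((Ttil o).comap (fun p : (Fin (t + 1) → S) × (Fin (t + 1) → Z) => p.2 (Fin.last t))
          (by fun_prop) p).map
            (fun s' => (Fin.snoc p.1 s', Fin.snoc p.2 (φ s'))) := by
      intro p
      rw [Kernel.map_apply _ hφ]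
      exact aux_bind φ hφ _ _ (hG (p.2 (Fin.last t)) o)
        (fun z' s' => ((Fin.snoc p.1 s', Fin.snoc p.2 z') :
              (Fin (t + 1 + 1) → S) × (Fin (t + 1 + 1) → Z)))
        ((aux_snoc measurable_const measurable_snd).prodMk
          (aux_snoc measurable_const measurable_fst))
    simp_rw [key]
    rw [aux_bind_map _ (hh _), aux_map_bind _ _ (hh _)]
    · congr 1
      funext traj
      have hs : Measurable (fun s' : S => (Fin.snoc traj s' : Fin (t + 1 + 1) → S)) :=
        aux_snoc measurable_const measurable_id
      rw [Measure.map_map (hh _) hs, hdyn]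
      rw [Kernel.comap_apply]
      congr 1
      funext s'
      refine Prod.ext rfl ?_
      funext i
      refine Fin.lastCases ?_ (fun i => ?_) i <;> simp
    · exact aux_meas ((T o).comap (fun traj : Fin (t + 1) → S => traj (Fin.last t)) (by fun_prop))
        (fun traj s' => (Fin.snoc traj s' : Fin (t + 1 + 1) → S))
        (aux_snoc measurable_fst measurable_snd)
    · exact aux_meas ((Ttil o).comap
        (fun p : (Fin (t + 1) → S) × (Fin (t + 1) → Z) => p.2 (Fin.last t)) (by fun_prop))
        (fun p s' => ((Fin.snoc p.1 s', Fin.snoc p.2 (φ s')) :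
              (Fin (t + 1 + 1) → S) × (Fin (t + 1 + 1) → Z)))
        ((aux_snoc (by fun_prop) (by fun_prop)).prodMk (aux_snoc (by fun_prop) (by fun_prop)))

/-- if `φ` is dynamics-preserving, i.e. `T_o(s) = T̃_o(φ(s))` for Markov kernels
`T̃_o : Z → P(S)`, and the abstract kernels are `T̄_o(z) := (T̃_o z).map φ`, then there exist an
initial grounding `G₀` and a transition grounding `G` (Markov kernels) such that (i) `p₀`
factors as `(p₀.map φ).bind G₀` with `G₀(z)` supported on `φ⁻¹{z}` almost everywhere, (ii)
`T̃_o(z) = ∫ G(z,o,z') d(T̄_o z)(z')` with `G(z,o,z')` supported on `φ⁻¹{z'}` almost everywhere,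
and (iii) the grounded simulated distribution equals the ground future-state distribution for
every horizon and every option sequence. -/
theorem dynamics_preserving_implies_grounded_simulation
    {S Z O : Type*} [MeasurableSpace S] [StandardBorelSpace S] [Nonempty S]
    [MeasurableSpace Z] [StandardBorelSpace Z] [Nonempty Z]
    [Fintype O] [MeasurableSpace O] [DiscreteMeasurableSpace O]
    (p₀ : Measure S) [IsProbabilityMeasure p₀]
    (φ : S → Z) (hφ : Measurable φ)
    (T : O → Kernel S S) (hT : ∀ o, IsMarkovKernel (T o))
    (Ttil : O → Kernel Z S) (hTtil : ∀ o, IsMarkovKernel (Ttil o))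
    (hdyn : ∀ o s, T o s = Ttil o (φ s)) :
    ∃ (G₀ : Kernel Z S), IsMarkovKernel G₀ ∧
      ∃ (G : Kernel (Z × O × Z) S), IsMarkovKernel G ∧
        -- (i)
        (p₀ = (p₀.map φ).bind (fun z => G₀ z) ∧
          ∀ᵐ z ∂(p₀.map φ), G₀ z (φ ⁻¹' {z}) = 1) ∧
        -- (ii)
        (∀ (z : Z) (o : O),
          Ttil o z = (((Ttil o).map φ) z).bind (fun z' => G (z, o, z')) ∧
          ∀ᵐ z' ∂(((Ttil o).map φ) z), G (z, o, z') (φ ⁻¹' {z'}) = 1) ∧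
        -- (iii)
        (∀ (t : ℕ) (os : Fin t → O),
          simGroundLaw p₀ φ (fun o => (Ttil o).map φ) G₀ G t os =
            groundLaw p₀ T t os) := by
  classical
  let κ : Kernel (Z × O) S := ⟨fun p => Ttil p.2 p.1,
    measurable_from_prod_countable_left fun o => (Ttil o).measurable⟩
  have hκ : IsMarkovKernel κ := ⟨fun p => (hTtil p.2).isProbabilityMeasure p.1⟩
  obtain ⟨η₀, hη₀, h0⟩ := aux_disint φ hφ (Kernel.const Unit p₀)
  obtain ⟨η, hη, h1⟩ := aux_disint φ hφ κ
  let G₀ : Kernel Z S := η₀.comap (fun z => ((), z)) (by fun_prop)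
  let G : Kernel (Z × O × Z) S := η.comap (fun p => ((p.1, p.2.1), p.2.2)) (by fun_prop)
  have g0 : AuxGood φ p₀ G₀ := fun A hA => h0 () A hA
  have g1 : ∀ z o, AuxGood φ (Ttil o z) (G.comap (fun z' => (z, o, z')) (by fun_prop)) :=
    fun z o A hA => h1 (z, o) A hA
  have hG₀ : IsMarkovKernel G₀ := inferInstance
  have hG : IsMarkovKernel G := inferInstance
  refine ⟨G₀, hG₀, G, hG, ⟨?_, aux_supp φ hφ p₀ G₀ g0⟩, fun z o => ⟨?_, ?_⟩, fun t os => ?_⟩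
  · have := aux_bind φ hφ p₀ G₀ g0 (fun _ s => s) measurable_snd
    simpa using this.symm
  · rw [Kernel.map_apply _ hφ]
    have := aux_bind φ hφ _ _ (g1 z o) (fun _ s => s) measurable_snd
    simpa using this.symm
  · rw [Kernel.map_apply _ hφ]
    exact aux_supp φ hφ _ _ (g1 z o)
  · rw [simGroundLaw, aux_sim p₀ φ hφ T hT Ttil hTtil hdyn G₀ G g0 g1,
      Measure.map_map measurable_fst (by fun_prop)]
    exact Measure.map_id
end

section
/- Suppose abstract kernels T̄_o : Z → P(Z), an initial grounding G₀ : Z → P(S) with G₀(z)(φ⁻¹{z}) = 1 for every z and p₀ = (p₀.map φ).bind G₀, and a transition grounding G : Z × O × Z → P(S) with G(z, o, z')(φ⁻¹{z'}) = 1 for every (z, o, z'), are such that B̄_t(o₀, …, o_{t−1}) = B_t(o₀, …, o_{t−1}) for every horizon t ≥ 0 and every option sequence (o₀, …, o_{t−1}). Define T̃_o(z) := ∫ G(z, o, z') d(T̄_o z)(z'). Then the ground dynamics factor through φ on reachable states: for every t ≥ 0, every option sequence (o₀, …, o_{t−1}), and every o ∈ O, the equality of probability measures T_o(s_t) = T̃_o(φ(s_t))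 holds for B_t(o₀, …, o_{t−1})-almost every trajectory (s₀, …, s_t); i.e., φ is dynamics-preserving almost everywhere on reachable states. -/
open MeasureTheory ProbabilityTheory

open scoped ENNReal

lemma aux_measurable_snoc {S : Type*} [MeasurableSpace S] (n : ℕ) :
    Measurable (fun q : (Fin n → S) × S => (Fin.snoc q.1 q.2 : Fin (n + 1) → S)) := by
  rw [measurable_pi_iff]
  intro i
  refine Fin.lastCases ?_ (fun j => ?_) i
  · simpa using measurable_snd
  · simp only [Fin.snoc_castSucc]
    exact (measurable_pi_apply j).comp measurable_fst

lemma aux_measurable_step {A B C : Type*} [MeasurableSpace A] [MeasurableSpace B]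
    [MeasurableSpace C] (κ : Kernel A B) [IsMarkovKernel κ] (F : A × B → C) (hF : Measurable F) :
    Measurable (fun a => (κ a).map (fun b => F (a, b))) := by
  refine Measure.measurable_of_measurable_coe _ fun s hs => ?_
  have : (fun a => ((κ a).map (fun b => F (a, b))) s) =
      fun a => κ a (Prod.mk a ⁻¹' (F ⁻¹' s)) := by
    funext a
    rw [Measure.map_apply (by fun_prop) hs]
    rfl
  rw [this]
  exact Kernel.measurable_kernel_prodMk_left (hF hs)

lemma aux_bind_step {A B C : Type*} [MeasurableSpace A] [MeasurableSpace B]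
    [MeasurableSpace C] (μ : Measure A) [SFinite μ]
    (κ : Kernel A B) [IsMarkovKernel κ] (F : A × B → C) (hF : Measurable F) :
    μ.bind (fun a => (κ a).map (fun b => F (a, b))) = (μ ⊗ₘ κ).map F := by
  ext s hs
  rw [Measure.bind_apply hs (aux_measurable_step κ F hF).aemeasurable, Measure.map_apply hF hs,
    Measure.compProd_apply (hF hs)]
  refine lintegral_congr fun a => ?_
  rw [Measure.map_apply (by fun_prop) hs]
  rfl

lemma aux_compProd_step {A B C D : Type*} [MeasurableSpace A] [MeasurableSpace B]
    [MeasurableSpace C] [MeasurableSpace D] (κ : Kernel A B) [IsMarkovKernel κ]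
    (η : Kernel (A × B) C) [IsMarkovKernel η] (F : B × C → D) (hF : Measurable F) (a : A) :
    (κ a).bind (fun b => (η (a, b)).map (fun c => F (b, c))) = ((κ ⊗ₖ η) a).map F := by
  ext s hs
  have hm : Measurable (fun b => (η (a, b)).map (fun c => F (b, c))) :=
    aux_measurable_step (η.comap (fun b => (a, b)) (by fun_prop)) F hF
  rw [Measure.bind_apply hs hm.aemeasurable, Measure.map_apply hF hs,
    Kernel.compProd_apply (hF hs)]
  refine lintegral_congr fun b => ?_
  rw [Measure.map_apply (by fun_prop) hs]
  rfl

/-- The ground step kernel. -/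
noncomputable def auxK {S : Type*} [MeasurableSpace S] (T : Kernel S S) (t : ℕ) :
    Kernel (Fin (t + 1) → S) S :=
  T.comap (fun x => x (Fin.last t)) (by fun_prop)

instance {S : Type*} [MeasurableSpace S] (T : Kernel S S) [IsMarkovKernel T] (t : ℕ) :
    IsMarkovKernel (auxK T t) := by unfold auxK; infer_instance

lemma aux_ground_succ {S O : Type*} [MeasurableSpace S]
    (p₀ : Measure S) (T : O → Kernel S S) (hT : ∀ o, IsMarkovKernel (T o)) (t : ℕ)
    (os : Fin (t + 1) → O) [SFinite (groundLaw p₀ T t (fun i => os i.castSucc))] :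
    groundLaw p₀ T (t + 1) os =
      (groundLaw p₀ T t (fun i => os i.castSucc) ⊗ₘ auxK (T (os (Fin.last t))) t).map
        (fun q => (Fin.snoc q.1 q.2 : Fin (t + 2) → S)) := by
  rw [← aux_bind_step _ _ _ (aux_measurable_snoc _)]
  rfl

lemma aux_ground_prob {S O : Type*} [MeasurableSpace S]
    (p₀ : Measure S) [IsProbabilityMeasure p₀] (T : O → Kernel S S)
    (hT : ∀ o, IsMarkovKernel (T o)) (t : ℕ) (os : Fin t → O) :
    IsProbabilityMeasure (groundLaw p₀ T t os) := by
  induction t with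
  | zero => exact Measure.isProbabilityMeasure_map (by fun_prop)
  | succ t ih =>
    have := ih (fun i => os i.castSucc)
    rw [aux_ground_succ p₀ T hT]
    exact Measure.isProbabilityMeasure_map (aux_measurable_snoc _).aemeasurable

/-- The abstract one-step kernel producing the next abstract state and its grounding. -/
noncomputable def auxJ {Z S O : Type*} [MeasurableSpace S] [MeasurableSpace Z]
    [MeasurableSpace O] (Tb : Kernel Z Z) (G : Kernel (Z × O × Z) S) (o : O) :
    Kernel Z (Z × S) :=
  Tb ⊗ₖ (G.comap (fun q : Z × Z => (q.1, o, q.2)) (by fun_prop))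

instance {Z S O : Type*} [MeasurableSpace S] [MeasurableSpace Z]
    [MeasurableSpace O] (Tb : Kernel Z Z) [IsMarkovKernel Tb] (G : Kernel (Z × O × Z) S)
    [IsMarkovKernel G] (o : O) :
    IsMarkovKernel (auxJ Tb G o) := by unfold auxJ; infer_instance

lemma aux_J_snd {Z S O : Type*} [MeasurableSpace S] [MeasurableSpace Z]
    [MeasurableSpace O] (Tb : Kernel Z Z) [IsMarkovKernel Tb] (G : Kernel (Z × O × Z) S)
    [IsMarkovKernel G] (o : O) (z : Z) :
    (auxJ Tb G o).snd z = (Tb z).bind (fun z' => G (z, o, z')) := by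
  rw [Kernel.snd_apply, auxJ, ← aux_compProd_step _ _ _ measurable_snd]
  simp [Kernel.comap_apply]

/-- The assembly map. -/
def auxF {S Z : Type*} (t : ℕ)
    (q : ((Fin (t + 1) → S) × (Fin (t + 1) → Z)) × (Z × S)) :
    (Fin (t + 2) → S) × (Fin (t + 2) → Z) :=
  (Fin.snoc q.1.1 q.2.2, Fin.snoc q.1.2 q.2.1)

lemma aux_F_meas {S Z : Type*} [MeasurableSpace S] [MeasurableSpace Z] (t : ℕ) :
    Measurable (auxF (S := S) (Z := Z) t) := by
  refine Measurable.prodMk ?_ ?_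
  · exact (aux_measurable_snoc (S := S) (t + 1)).comp
      (f := fun q : ((Fin (t + 1) → S) × (Fin (t + 1) → Z)) × (Z × S) => (q.1.1, q.2.2))
      (by fun_prop)
  · exact (aux_measurable_snoc (S := Z) (t + 1)).comp
      (f := fun q : ((Fin (t + 1) → S) × (Fin (t + 1) → Z)) × (Z × S) => (q.1.2, q.2.1))
      (by fun_prop)

/-- The simulated step kernel. -/
noncomputable def auxL {Z S O : Type*} [MeasurableSpace S] [MeasurableSpace Z]
    [MeasurableSpace O] (Tb : Kernel Z Z) (G : Kernel (Z × O × Z) S) (o : O) (t : ℕ) :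
    Kernel ((Fin (t + 1) → S) × (Fin (t + 1) → Z)) (Z × S) :=
  (auxJ Tb G o).comap (fun p => p.2 (Fin.last t)) (by fun_prop)

instance {Z S O : Type*} [MeasurableSpace S] [MeasurableSpace Z]
    [MeasurableSpace O] (Tb : Kernel Z Z) [IsMarkovKernel Tb] (G : Kernel (Z × O × Z) S)
    [IsMarkovKernel G] (o : O) (t : ℕ) :
    IsMarkovKernel (auxL Tb G o t) := by unfold auxL; infer_instance

lemma aux_sim_succ {S Z O : Type*} [MeasurableSpace S] [MeasurableSpace Z]
    [MeasurableSpace O]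
    (p₀ : Measure S) (φ : S → Z) (Tbar : O → Kernel Z Z) (hTbar : ∀ o, IsMarkovKernel (Tbar o))
    (G₀ : Kernel Z S) (G : Kernel (Z × O × Z) S) [IsMarkovKernel G] (t : ℕ)
    (os : Fin (t + 1) → O) [SFinite (simLaw p₀ φ Tbar G₀ G t (fun i => os i.castSucc))] :
    simLaw p₀ φ Tbar G₀ G (t + 1) os =
      (simLaw p₀ φ Tbar G₀ G t (fun i => os i.castSucc) ⊗ₘ
        auxL (Tbar (os (Fin.last t))) G (os (Fin.last t)) t).map (auxF t) := by
  rw [← aux_bind_step _ _ _ (aux_F_meas t)]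
  rw [simLaw]
  congr 1
  funext p
  have h := aux_compProd_step (Tbar (os (Fin.last t)))
    (G.comap (fun q : Z × Z => (q.1, os (Fin.last t), q.2)) (by fun_prop))
    (fun q => auxF t (p, q)) ((aux_F_meas t).comp (by fun_prop)) (p.2 (Fin.last t))
  exact h

lemma aux_sim_zero {S Z O : Type*} [MeasurableSpace S] [MeasurableSpace Z]
    [MeasurableSpace O]
    (p₀ : Measure S) [IsProbabilityMeasure p₀] (φ : S → Z) (Tbar : O → Kernel Z Z)
    (G₀ : Kernel Z S) [IsMarkovKernel G₀] (G : Kernel (Z × O × Z) S) (os : Fin 0 → O) :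
    simLaw p₀ φ Tbar G₀ G 0 os =
      (p₀.map φ ⊗ₘ G₀).map (fun q => (fun _ => q.2, fun _ => q.1)) := by
  rw [← aux_bind_step _ _ _ (by fun_prop)]
  rfl

lemma aux_sim_prob {S Z O : Type*} [MeasurableSpace S] [MeasurableSpace Z]
    [MeasurableSpace O]
    (p₀ : Measure S) [IsProbabilityMeasure p₀] (φ : S → Z) (hφ : Measurable φ)
    (Tbar : O → Kernel Z Z) (hTbar : ∀ o, IsMarkovKernel (Tbar o))
    (G₀ : Kernel Z S) [IsMarkovKernel G₀] (G : Kernel (Z × O × Z) S) [IsMarkovKernel G] (t : ℕ)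
    (os : Fin t → O) : IsProbabilityMeasure (simLaw p₀ φ Tbar G₀ G t os) := by
  induction t with
  | zero =>
    have : IsProbabilityMeasure (p₀.map φ) := Measure.isProbabilityMeasure_map hφ.aemeasurable
    rw [aux_sim_zero]
    exact Measure.isProbabilityMeasure_map (by fun_prop)
  | succ t ih =>
    have := ih (fun i => os i.castSucc)
    rw [aux_sim_succ p₀ φ Tbar hTbar]
    exact Measure.isProbabilityMeasure_map (aux_F_meas _).aemeasurable

lemma aux_sim_ae {S Z O : Type*} [MeasurableSpace S] [MeasurableSpace Z] [StandardBorelSpace Z]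
    [MeasurableSpace O]
    (p₀ : Measure S) [IsProbabilityMeasure p₀] (φ : S → Z) (hφ : Measurable φ)
    (Tbar : O → Kernel Z Z) (hTbar : ∀ o, IsMarkovKernel (Tbar o))
    (G₀ : Kernel Z S) [IsMarkovKernel G₀]
    (hG₀supp : ∀ z, G₀ z (φ ⁻¹' {z}) = 1)
    (G : Kernel (Z × O × Z) S) [IsMarkovKernel G]
    (hGsupp : ∀ (z : Z) (o : O) (z' : Z), G (z, o, z') (φ ⁻¹' {z'}) = 1) (t : ℕ)
    (os : Fin t → O) :
    ∀ᵐ p ∂(simLaw p₀ φ Tbar G₀ G t os), φ (p.1 (Fin.last t)) = p.2 (Fin.last t) := by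
  have hset : ∀ t : ℕ, MeasurableSet {p : (Fin (t + 1) → S) × (Fin (t + 1) → Z) |
      φ (p.1 (Fin.last t)) = p.2 (Fin.last t)} := fun t =>
    measurableSet_eq_fun (by fun_prop) (by fun_prop)
  have hset2 : MeasurableSet {q : Z × S | φ q.2 = q.1} :=
    measurableSet_eq_fun (by fun_prop) (by fun_prop)
  have hae : ∀ (μ : Measure S) [IsProbabilityMeasure μ] (z : Z), μ (φ ⁻¹' {z}) = 1 →
      ∀ᵐ s ∂μ, φ s = z := by
    intro μ _ z h
    exact (mem_ae_iff_prob_eq_one (hφ (measurableSet_singleton z))).2 h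
  cases t with
  | zero =>
    have : IsProbabilityMeasure (p₀.map φ) := Measure.isProbabilityMeasure_map hφ.aemeasurable
    rw [aux_sim_zero, ae_map_iff (by fun_prop) (hset 0)]
    rw [Measure.ae_compProd_iff hset2]
    exact Filter.Eventually.of_forall fun z => hae _ z (hG₀supp z)
  | succ t =>
    have := aux_sim_prob p₀ φ hφ Tbar hTbar G₀ G t (fun i => os i.castSucc)
    rw [aux_sim_succ p₀ φ Tbar hTbar, ae_map_iff (aux_F_meas t).aemeasurable (hset _)]
    simp only [auxF, Fin.snoc_last]
    rw [Measure.ae_compProd_iff (p := fun x : ((Fin (t + 1) → S) × (Fin (t + 1) → Z)) × (Z × S) => φ x.2.2 = x.2.1)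
      (measurableSet_eq_fun (by fun_prop) (by fun_prop))]
    refine Filter.Eventually.of_forall fun p => ?_
    simp only [auxL, auxJ, Kernel.comap_apply]
    rw [Kernel.ae_compProd_iff (p := fun q => φ q.2 = q.1) hset2]
    exact Filter.Eventually.of_forall fun z => hae _ z (hGsupp _ _ z)

/-- if abstract kernels `T̄_o`, an initial grounding `G₀` (supported on the fibers
of `φ`, with `p₀ = (p₀.map φ).bind G₀`) and a transition grounding `G` (supported on the fibers
of `φ`) reproduce the ground future-state distribution at every horizon and for every option
sequence, then the ground dynamics factor through `φ` on reachable states: for every horizon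
`t`, every option sequence, and every option `o`, `T_o(s_t) = T̃_o(φ(s_t))` (where
`T̃_o(z) := ∫ G(z,o,z') d(T̄_o z)(z')`) holds for `B_t`-almost every trajectory. -/
theorem grounded_simulation_implies_dynamics_preserving
    {S Z O : Type*} [MeasurableSpace S] [StandardBorelSpace S] [Nonempty S]
    [MeasurableSpace Z] [StandardBorelSpace Z] [Nonempty Z]
    [Fintype O] [MeasurableSpace O] [DiscreteMeasurableSpace O]
    (p₀ : Measure S) [IsProbabilityMeasure p₀]
    (φ : S → Z) (hφ : Measurable φ)
    (T : O → Kernel S S) (hT : ∀ o, IsMarkovKernel (T o))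
    (Tbar : O → Kernel Z Z) (hTbar : ∀ o, IsMarkovKernel (Tbar o))
    (G₀ : Kernel Z S) [IsMarkovKernel G₀]
    (hG₀supp : ∀ z, G₀ z (φ ⁻¹' {z}) = 1)
    (hp₀ : p₀ = (p₀.map φ).bind (fun z => G₀ z))
    (G : Kernel (Z × O × Z) S) [IsMarkovKernel G]
    (hGsupp : ∀ (z : Z) (o : O) (z' : Z), G (z, o, z') (φ ⁻¹' {z'}) = 1)
    (hsim : ∀ (t : ℕ) (os : Fin t → O),
      simGroundLaw p₀ φ Tbar G₀ G t os = groundLaw p₀ T t os) :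
    ∀ (t : ℕ) (os : Fin t → O) (o : O),
      ∀ᵐ traj ∂(groundLaw p₀ T t os),
        T o (traj (Fin.last t)) =
          (Tbar o (φ (traj (Fin.last t)))).bind
            (fun z' => G (φ (traj (Fin.last t)), o, z')) := by
  intro t os o
  have hP := aux_ground_prob p₀ T hT t os
  have hQ := aux_sim_prob p₀ φ hφ Tbar hTbar G₀ G t os
  have hA := aux_sim_ae p₀ φ hφ Tbar hTbar G₀ hG₀supp G hGsupp t os
  let κ : Kernel (Fin (t + 1) → S) S :=
    (auxJ (Tbar o) G o).snd.comap (fun x => φ (x (Fin.last t))) (by fun_prop)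
  have hos : (fun i : Fin t => (Fin.snoc os o : Fin (t + 1) → O) i.castSucc) = os := by
    funext i; simp
  have key : (groundLaw p₀ T t os ⊗ₘ auxK (T o) t).map
        (fun q => (Fin.snoc q.1 q.2 : Fin (t + 2) → S)) =
      (groundLaw p₀ T t os ⊗ₘ κ).map (fun q => (Fin.snoc q.1 q.2 : Fin (t + 2) → S)) := by
    have h1 : groundLaw p₀ T (t + 1) (Fin.snoc os o) =
        (groundLaw p₀ T t os ⊗ₘ auxK (T o) t).map
        (fun q => (Fin.snoc q.1 q.2 : Fin (t + 2) → S)) := by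
      have := aux_ground_prob p₀ T hT t
        (fun i : Fin t => (Fin.snoc os o : Fin (t + 1) → O) i.castSucc)
      rw [aux_ground_succ p₀ T hT]
      simp only [hos, Fin.snoc_last]
    have h2 : simLaw p₀ φ Tbar G₀ G (t + 1) (Fin.snoc os o) =
        (simLaw p₀ φ Tbar G₀ G t os ⊗ₘ auxL (Tbar o) G o t).map (auxF t) := by
      have := aux_sim_prob p₀ φ hφ Tbar hTbar G₀ G t
        (fun i : Fin t => (Fin.snoc os o : Fin (t + 1) → O) i.castSucc)
      rw [aux_sim_succ p₀ φ Tbar hTbar]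
      simp only [hos, Fin.snoc_last]
    have h3 := hsim t os
    rw [← h1, ← hsim, simGroundLaw, h2, Measure.map_map measurable_fst (aux_F_meas t)]
    ext s hs
    have hsn := aux_measurable_snoc (S := S) (t + 1)
    have hm : MeasurableSet ((fun q : (Fin (t + 1) → S) × S =>
      (Fin.snoc q.1 q.2 : Fin (t + 2) → S)) ⁻¹' s) := hsn hs
    rw [Measure.map_apply (measurable_fst.comp (aux_F_meas t)) hs, Measure.map_apply hsn hs,
      Measure.compProd_apply ((measurable_fst.comp (aux_F_meas t)) hs),
      Measure.compProd_apply hm, ← h3, simGroundLaw,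
      lintegral_map (Kernel.measurable_kernel_prodMk_left hm) measurable_fst]
    refine lintegral_congr_ae ?_
    filter_upwards [hA] with p hp
    simp only [κ, Kernel.comap_apply, hp]
    rw [Kernel.snd_apply' _ _ (measurable_prodMk_left hm)]
    rfl
  have key2 : groundLaw p₀ T t os ⊗ₘ auxK (T o) t = groundLaw p₀ T t os ⊗ₘ κ := by
    have hinv : Measurable (fun x : Fin (t + 2) → S =>
        ((fun i : Fin (t + 1) => x i.castSucc), x (Fin.last (t + 1)))) := by fun_prop
    have h := congrArg (fun μ => μ.map (fun x : Fin (t + 2) → S =>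
        ((fun i : Fin (t + 1) => x i.castSucc), x (Fin.last (t + 1))))) key
    have hid : (fun x : Fin (t + 2) → S =>
        ((fun i : Fin (t + 1) => x i.castSucc), x (Fin.last (t + 1)))) ∘
        (fun q : (Fin (t + 1) → S) × S => (Fin.snoc q.1 q.2 : Fin (t + 2) → S)) = id := by
      funext q
      simp
    simpa only [Measure.map_map hinv (aux_measurable_snoc _), hid, Measure.map_id] using h
  filter_upwards [Kernel.ae_eq_of_compProd_eq key2] with x hx
  rw [← aux_J_snd]
  exact hx
end

section
/- Assume Rel is a support relation for G, that the grounding is dynamics-preserving on Rel (for every s̄ ∈ S̄ and every s with (s̄, s) ∈ Rel, T(s) = T̃(s̄) as probability measures on S), and that the abstract reward is the grounded expectation of the ground reward (R̄(s̄) = ∫ R dG(s̄) for every s̄). If v satisfies the ground Bellman equation and v̄ satisfies the abstract Bellman equation, then the abstract value equals the expected ground value under the grounding: v̄(s̄) = ∫ v dG(s̄) for every s̄ ∈ S̄. -/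
open MeasureTheory ProbabilityTheory

/-- If `Rel` is a support relation for the grounding kernel `G`, the grounding is
dynamics-preserving on `Rel` (i.e. `T s = (T̄ s̄).bind G` whenever `(s̄, s) ∈ Rel`), and the
abstract reward is the grounded expectation of the ground reward, then any bounded measurable
solutions of the ground and abstract Bellman equations satisfy `v̄ s̄ = ∫ v dG(s̄)`. -/
theorem abstract_value_eq_grounded_value
    {S Sb : Type*} [MeasurableSpace S] [MeasurableSpace Sb]
    (T : Kernel S S) [IsMarkovKernel T]
    (Tb : Kernel Sb Sb) [IsMarkovKernel Tb]
    (G : Kernel Sb S) [IsMarkovKernel G]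
    (γ : ℝ) (hγ0 : 0 ≤ γ) (hγ1 : γ < 1)
    (R : S → ℝ) (hRmeas : Measurable R) (hRbdd : ∃ C, ∀ s, |R s| ≤ C)
    (Rb : Sb → ℝ) (hRbmeas : Measurable Rb) (hRbbdd : ∃ C, ∀ sb, |Rb sb| ≤ C)
    (Rel : Set (Sb × S)) (hRelMeas : MeasurableSet Rel)
    (hRelSupp : ∀ sb, G sb {s | (sb, s) ∈ Rel} = 1)
    (hdyn : ∀ sb s, (sb, s) ∈ Rel → T s = (Tb sb).bind (fun sb' => G sb'))
    (hRbG : ∀ sb, Rb sb = ∫ s, R s ∂(G sb))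
    (v : S → ℝ) (hvmeas : Measurable v) (hvbdd : ∃ C, ∀ s, |v s| ≤ C)
    (hvBell : ∀ s, v s = R s + γ * ∫ s', v s' ∂(T s))
    (vb : Sb → ℝ) (hvbmeas : Measurable vb) (hvbbdd : ∃ C, ∀ sb, |vb sb| ≤ C)
    (hvbBell : ∀ sb, vb sb = Rb sb + γ * ∫ sb', vb sb' ∂(Tb sb)) :
    ∀ sb, vb sb = ∫ s, v s ∂(G sb) := by
  obtain ⟨Cv, hCv⟩ := hvbdd
  obtain ⟨Cb, hCb⟩ := hvbbdd
  obtain ⟨CR, hCR⟩ := hRbdd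
  have hvint : ∀ (μ : Measure S) [IsProbabilityMeasure μ], Integrable v μ := fun μ _ =>
    Integrable.of_bound hvmeas.aestronglyMeasurable Cv (Filter.Eventually.of_forall hCv)
  have hRint : ∀ (μ : Measure S) [IsProbabilityMeasure μ], Integrable R μ := fun μ _ =>
    Integrable.of_bound hRmeas.aestronglyMeasurable CR (Filter.Eventually.of_forall hCR)
  have hvbint : ∀ (μ : Measure Sb) [IsProbabilityMeasure μ], Integrable vb μ := fun μ _ =>
    Integrable.of_bound hvbmeas.aestronglyMeasurable Cb (Filter.Eventually.of_forall hCb)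
  have hwb : ∀ sb, |∫ s, v s ∂(G sb)| ≤ Cv := by
    intro sb
    have := norm_integral_le_of_norm_le_const (μ := G sb) (f := v) (C := Cv)
      (Filter.Eventually.of_forall hCv)
    simpa using this
  have hwmeas : StronglyMeasurable (fun sb => ∫ s, v s ∂(G sb)) :=
    hvmeas.stronglyMeasurable.integral_kernel
  have hwint : ∀ (μ : Measure Sb) [IsProbabilityMeasure μ],
      Integrable (fun sb => ∫ s, v s ∂(G sb)) μ := fun μ _ =>
    Integrable.of_bound hwmeas.aestronglyMeasurable Cv (Filter.Eventually.of_forall hwb)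
  have hw : ∀ sb, ∫ s, v s ∂(G sb) = Rb sb + γ * ∫ sb', (∫ s, v s ∂(G sb')) ∂(Tb sb) := by
    intro sb
    have hms : MeasurableSet {s | (sb, s) ∈ Rel} := measurable_prodMk_left hRelMeas
    have hae : ∀ᵐ s ∂(G sb), (sb, s) ∈ Rel := (mem_ae_iff_prob_eq_one hms).2 (hRelSupp sb)
    have hb : ∫ s, v s ∂((Tb sb).bind (fun sb' => G sb'))
        = ∫ sb', (∫ s, v s ∂(G sb')) ∂(Tb sb) := by
      exact Kernel.integral_comp (η := G) (κ := Tb) (a := sb) (hvint _)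
    have h1 : ∫ s, v s ∂(G sb)
        = ∫ s, (R s + γ * ∫ sb', (∫ s, v s ∂(G sb')) ∂(Tb sb)) ∂(G sb) := by
      apply integral_congr_ae
      filter_upwards [hae] with s hs
      rw [hvBell s, hdyn sb s hs, hb]
    rw [h1, integral_add (hRint _) (integrable_const _), hRbG]
    simp
  have key : ∀ n : ℕ, ∀ sb, |vb sb - ∫ s, v s ∂(G sb)| ≤ γ ^ n * (Cb + Cv) := by
    intro n
    induction n with
    | zero =>
      intro sb
      have h1 := abs_sub (vb sb) (∫ s, v s ∂(G sb))
      have h2 := hCb sb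
      have h3 := hwb sb
      rw [pow_zero, one_mul]
      linarith
    | succ n ih =>
      intro sb
      have e : vb sb - ∫ s, v s ∂(G sb)
          = γ * ∫ sb', (vb sb' - ∫ s, v s ∂(G sb')) ∂(Tb sb) := by
        rw [integral_sub (hvbint _) (hwint _), hvbBell sb, hw sb]
        ring
      have := norm_integral_le_of_norm_le_const (μ := Tb sb)
        (f := fun sb' => vb sb' - ∫ s, v s ∂(G sb')) (C := γ ^ n * (Cb + Cv))
        (Filter.Eventually.of_forall ih)
      rw [e, abs_mul, abs_of_nonneg hγ0, pow_succ', mul_assoc]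
      refine mul_le_mul_of_nonneg_left ?_ hγ0
      simpa using this
  intro sb
  have hlim : Filter.Tendsto (fun n : ℕ => γ ^ n * (Cb + Cv)) Filter.atTop (nhds 0) := by
    simpa using (tendsto_pow_atTop_nhds_zero_of_lt_one hγ0 hγ1).mul_const (Cb + Cv)
  have h0 : |vb sb - ∫ s, v s ∂(G sb)| ≤ 0 :=
    ge_of_tendsto' hlim (fun n => key n sb)
  exact sub_eq_zero.1 (abs_eq_zero.1 (le_antisymm h0 (abs_nonneg _)))
end

section
/- Assume Rel is a support relation for G, that for every s̄ ∈ S̄ and every s with (s̄, s) ∈ Rel, T(s) = T̃(s̄) as probability measures on S, and that R̄(s̄) = ∫ R dG(s̄) for every s̄. If v satisfies the ground Bellman equation, then the grounded value function W(s̄) := ∫ v dG(s̄) is bounded and measurable and satisfies the abstract Bellman equation: W(s̄) = R̄(s̄) + γ ∫ W d(T̄ s̄) for every s̄ ∈ S̄. -/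
open MeasureTheory ProbabilityTheory

/-- If `Rel` is a support relation for `G`, the grounding is dynamics-preserving on
`Rel`, and `R̄(s̄) = ∫ R dG(s̄)`, then for any bounded measurable solution `v` of the ground
Bellman equation, the grounded value function `W(s̄) := ∫ v dG(s̄)` is bounded, measurable, and
satisfies the abstract Bellman equation `W(s̄) = R̄(s̄) + γ ∫ W d(T̄ s̄)`. -/
theorem grounded_value_satisfies_abstract_bellman
    {S Sb : Type*} [MeasurableSpace S] [MeasurableSpace Sb]
    (T : Kernel S S) [IsMarkovKernel T]
    (Tb : Kernel Sb Sb) [IsMarkovKernel Tb]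
    (G : Kernel Sb S) [IsMarkovKernel G]
    (γ : ℝ) (hγ0 : 0 ≤ γ) (hγ1 : γ < 1)
    (R : S → ℝ) (hRmeas : Measurable R) (hRbdd : ∃ C, ∀ s, |R s| ≤ C)
    (Rb : Sb → ℝ) (hRbmeas : Measurable Rb) (hRbbdd : ∃ C, ∀ sb, |Rb sb| ≤ C)
    (Rel : Set (Sb × S)) (hRelMeas : MeasurableSet Rel)
    (hRelSupp : ∀ sb, G sb {s | (sb, s) ∈ Rel} = 1)
    (hdyn : ∀ sb s, (sb, s) ∈ Rel → T s = (Tb sb).bind (fun sb' => G sb'))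
    (hRbG : ∀ sb, Rb sb = ∫ s, R s ∂(G sb))
    (v : S → ℝ) (hvmeas : Measurable v) (hvbdd : ∃ C, ∀ s, |v s| ≤ C)
    (hvBell : ∀ s, v s = R s + γ * ∫ s', v s' ∂(T s)) :
    (∃ C, ∀ sb, |∫ s, v s ∂(G sb)| ≤ C) ∧
    Measurable (fun sb => ∫ s, v s ∂(G sb)) ∧
    ∀ sb, (∫ s, v s ∂(G sb)) = Rb sb + γ * ∫ sb', (∫ s, v s ∂(G sb')) ∂(Tb sb) := by
  obtain ⟨C, hC⟩ := hvbdd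
  obtain ⟨D, hD⟩ := hRbdd
  have hint : ∀ (μ : Measure S) [IsProbabilityMeasure μ], Integrable v μ := fun μ _ =>
    Integrable.of_bound hvmeas.aestronglyMeasurable C (Filter.Eventually.of_forall hC)
  have hintR : ∀ (μ : Measure S) [IsProbabilityMeasure μ], Integrable R μ := fun μ _ =>
    Integrable.of_bound hRmeas.aestronglyMeasurable D (Filter.Eventually.of_forall hD)
  refine ⟨⟨C, fun sb => ?_⟩, (hvmeas.stronglyMeasurable.integral_kernel (κ := G)).measurable,
    fun sb => ?_⟩
  · have h := norm_integral_le_of_norm_le_const (μ := G sb) (f := v) (C := C)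
      (Filter.Eventually.of_forall hC)
    simpa using h
  · have hae : ∀ᵐ s ∂(G sb), (sb, s) ∈ Rel := by
      have hm : MeasurableSet {s | (sb, s) ∈ Rel} := measurable_prodMk_left hRelMeas
      exact (mem_ae_iff_prob_eq_one hm).2 (hRelSupp sb)
    have key : ∫ s, v s ∂((Tb sb).bind (fun sb' => G sb'))
        = ∫ sb', (∫ s, v s ∂(G sb')) ∂(Tb sb) := by
      have h := Kernel.integral_comp (κ := Tb) (η := G) (a := sb) (f := v) (hint _)
      rw [Kernel.comp_apply] at h
      exact h
    have h2 : (∫ s, v s ∂(G sb))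
        = ∫ s, (R s + γ * ∫ sb', (∫ s, v s ∂(G sb')) ∂(Tb sb)) ∂(G sb) := by
      refine integral_congr_ae ?_
      filter_upwards [hae] with s hs
      rw [← key, ← hdyn sb s hs]
      exact hvBell s
    rw [h2, integral_add (hintR _) (integrable_const _), hRbG sb]
    simp
end

section
/- (Value Loss Bound) Assume Rel is a support relation for G, v satisfies the ground Bellman equation with ‖v‖_∞ ≤ Vmax, v̄ is bounded measurable and satisfies the abstract Bellman equation, and for every (s̄, s) ∈ Rel: ‖T(s) − T̃(s̄)‖₁² ≤ ε_T and |R(s) − R̄(s̄)|² ≤ ε_R. Then for every (s̄, s) ∈ Rel, |v(s) − v̄(s̄)| ≤ (√ε_R + γ · Vmax · √ε_T) / (1 − γ). -/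
open MeasureTheory ProbabilityTheory

/-- The total variation norm `‖μ - ν‖₁` of the difference of two finite measures, i.e. the total
mass of the total variation of the signed measure `μ - ν` (and junk value `0` if one of the
measures is not finite). -/
noncomputable def tvDist {α : Type*} [MeasurableSpace α] (μ ν : Measure α) : ℝ :=
  open scoped Classical in
  if h : IsFiniteMeasure μ ∧ IsFiniteMeasure ν then
    (((@Measure.toSignedMeasure α _ μ h.1) -
        (@Measure.toSignedMeasure α _ ν h.2)).totalVariation Set.univ).toReal
  else 0

lemma integral_sub_le_tvDist {α : Type*} [MeasurableSpace α] (μ ν : Measure α)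
    [hμ : IsFiniteMeasure μ] [hν : IsFiniteMeasure ν] (f : α → ℝ) (hf : Measurable f) (M : ℝ)
    (hM : ∀ x, |f x| ≤ M) :
    |∫ x, f x ∂μ - ∫ x, f x ∂ν| ≤ M * tvDist μ ν := by
  have hint : ∀ (ρ : Measure α) [IsFiniteMeasure ρ], Integrable f ρ := fun ρ _ =>
    Integrable.of_bound hf.aestronglyMeasurable M (Filter.Eventually.of_forall hM)
  have hb : ∀ (ρ : Measure α) [IsFiniteMeasure ρ], |∫ x, f x ∂ρ| ≤ M * ρ.real Set.univ :=
    fun ρ _ => norm_integral_le_of_norm_le_const (f := f) (C := M) (Filter.Eventually.of_forall hM)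
  unfold tvDist
  rw [dif_pos ⟨hμ, hν⟩]
  set σ : SignedMeasure α := μ.toSignedMeasure - ν.toSignedMeasure with hσ
  set p := σ.toJordanDecomposition.posPart with hp
  set n := σ.toJordanDecomposition.negPart with hn
  have : IsFiniteMeasure p := σ.toJordanDecomposition.posPart_finite
  have : IsFiniteMeasure n := σ.toJordanDecomposition.negPart_finite
  have h1 : p.toSignedMeasure - n.toSignedMeasure = σ :=
    σ.toSignedMeasure_toJordanDecomposition
  have h2 : μ + n = ν + p := by
    apply Measure.toSignedMeasure_eq_toSignedMeasure_iff.mp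
    rw [Measure.toSignedMeasure_add, Measure.toSignedMeasure_add]
    rw [hσ, sub_eq_sub_iff_add_eq_add] at h1
    rw [← h1, add_comm]
  have h3 : ∫ x, f x ∂μ + ∫ x, f x ∂n = ∫ x, f x ∂ν + ∫ x, f x ∂p := by
    rw [← integral_add_measure (hint μ) (hint n), h2, integral_add_measure (hint ν) (hint p)]
  have h4 : (σ.totalVariation Set.univ).toReal = p.real Set.univ + n.real Set.univ := by
    rw [SignedMeasure.totalVariation, Measure.add_apply,
      ENNReal.toReal_add (measure_ne_top p _) (measure_ne_top n _)]
    rfl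
  rw [h4]
  have := hb p
  have := hb n
  have h5 : ∫ x, f x ∂μ - ∫ x, f x ∂ν = ∫ x, f x ∂p - ∫ x, f x ∂n := by linarith
  rw [h5]
  refine (abs_sub _ _).trans ?_
  linarith

/-- Value Loss Bound: if on the support relation `Rel` the grounded transition
`T̃(s̄) = (T̄ s̄).bind G` is `√ε_T`-accurate in total variation and the abstract reward is
`√ε_R`-accurate, then bounded measurable solutions of the ground and abstract Bellman equations
satisfy `|v(s) - v̄(s̄)| ≤ (√ε_R + γ Vmax √ε_T) / (1 - γ)` on `Rel`. -/
theorem value_loss_bound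
    {S Sb : Type*} [MeasurableSpace S] [MeasurableSpace Sb]
    (T : Kernel S S) [IsMarkovKernel T]
    (Tb : Kernel Sb Sb) [IsMarkovKernel Tb]
    (G : Kernel Sb S) [IsMarkovKernel G]
    (γ : ℝ) (hγ0 : 0 ≤ γ) (hγ1 : γ < 1)
    (R : S → ℝ) (hRmeas : Measurable R) (hRbdd : ∃ C, ∀ s, |R s| ≤ C)
    (Rb : Sb → ℝ) (hRbmeas : Measurable Rb) (hRbbdd : ∃ C, ∀ sb, |Rb sb| ≤ C)
    (Rel : Set (Sb × S)) (hRelMeas : MeasurableSet Rel)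
    (hRelSupp : ∀ sb, G sb {s | (sb, s) ∈ Rel} = 1)
    (εT εR Vmax : ℝ) (hεT : 0 ≤ εT) (hεR : 0 ≤ εR) (hVmax : 0 ≤ Vmax)
    (v : S → ℝ) (hvmeas : Measurable v) (hvbdd : ∀ s, |v s| ≤ Vmax)
    (hvBell : ∀ s, v s = R s + γ * ∫ s', v s' ∂(T s))
    (vb : Sb → ℝ) (hvbmeas : Measurable vb) (hvbbdd : ∃ C, ∀ sb, |vb sb| ≤ C)
    (hvbBell : ∀ sb, vb sb = Rb sb + γ * ∫ sb', vb sb' ∂(Tb sb))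
    (hT : ∀ sb s, (sb, s) ∈ Rel →
      tvDist (T s) ((Tb sb).bind (fun sb' => G sb')) ^ 2 ≤ εT)
    (hR : ∀ sb s, (sb, s) ∈ Rel → |R s - Rb sb| ^ 2 ≤ εR) :
    ∀ sb s, (sb, s) ∈ Rel →
      |v s - vb sb| ≤ (Real.sqrt εR + γ * Vmax * Real.sqrt εT) / (1 - γ) := by
  intro sb0 s0 h0
  obtain ⟨C, hC⟩ := hvbbdd
  have step : ∀ D : ℝ, (∀ sb s, (sb, s) ∈ Rel → |v s - vb sb| ≤ D) →
      ∀ sb s, (sb, s) ∈ Rel →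
        |v s - vb sb| ≤ Real.sqrt εR + γ * Vmax * Real.sqrt εT + γ * D := by
    intro D hD sb s hs
    have hvi : ∀ (ρ : Measure S) [IsFiniteMeasure ρ], Integrable v ρ := fun ρ _ =>
      Integrable.of_bound hvmeas.aestronglyMeasurable Vmax (Filter.Eventually.of_forall hvbdd)
    have hGm : Measurable (fun sb' => ∫ s', v s' ∂(G sb')) :=
      (hvmeas.stronglyMeasurable.integral_kernel (κ := G)).measurable
    have hGb : ∀ sb', |∫ s', v s' ∂(G sb')| ≤ Vmax := fun sb' => by
      have := norm_integral_le_of_norm_le_const (μ := G sb') (f := v) (C := Vmax)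
        (Filter.Eventually.of_forall hvbdd)
      simpa using this
    have hGi : Integrable (fun sb' => ∫ s', v s' ∂(G sb')) (Tb sb) :=
      Integrable.of_bound hGm.aestronglyMeasurable Vmax (Filter.Eventually.of_forall hGb)
    have hbi : Integrable vb (Tb sb) :=
      Integrable.of_bound hvbmeas.aestronglyMeasurable C (Filter.Eventually.of_forall hC)
    have : IsProbabilityMeasure ((Tb sb).bind (fun sb' => G sb')) :=
      inferInstanceAs (IsProbabilityMeasure ((Tb sb).bind G))
    have e1 : ∫ s', v s' ∂((Tb sb).bind (fun sb' => G sb'))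
        = ∫ sb', ∫ s', v s' ∂(G sb') ∂(Tb sb) :=
      Kernel.integral_comp (κ := Tb) (η := G) (a := sb) (hvi _)
    have b1 := integral_sub_le_tvDist (T s) ((Tb sb).bind (fun sb' => G sb')) v hvmeas Vmax hvbdd
    have b2 : tvDist (T s) ((Tb sb).bind (fun sb' => G sb')) ≤ Real.sqrt εT :=
      Real.le_sqrt_of_sq_le (hT sb s hs)
    have b3 : |R s - Rb sb| ≤ Real.sqrt εR := Real.le_sqrt_of_sq_le (hR sb s hs)
    have b4 : ∀ sb', |∫ s', v s' ∂(G sb') - vb sb'| ≤ D := by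
      intro sb'
      have e : ∫ s', v s' ∂(G sb') - vb sb' = ∫ s', (v s' - vb sb') ∂(G sb') := by
        rw [integral_sub (hvi _) (integrable_const _)]; simp
      rw [e]
      have hae : ∀ᵐ s' ∂(G sb'), (sb', s') ∈ Rel :=
        (prob_compl_eq_zero_iff (measurable_prodMk_left hRelMeas)).mpr (hRelSupp sb')
      have := norm_integral_le_of_norm_le_const (μ := G sb') (f := fun s' => v s' - vb sb')
        (C := D) (hae.mono fun s' h => hD sb' s' h)
      simpa using this
    have b5 : |∫ sb', ∫ s', v s' ∂(G sb') ∂(Tb sb) - ∫ sb', vb sb' ∂(Tb sb)| ≤ D := by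
      rw [← integral_sub hGi hbi]
      have := norm_integral_le_of_norm_le_const (μ := Tb sb) (C := D)
        (f := fun sb' => ∫ s', v s' ∂(G sb') - vb sb') (Filter.Eventually.of_forall b4)
      simpa using this
    rw [e1] at b1
    have b6 := b1.trans (mul_le_mul_of_nonneg_left b2 hVmax)
    rw [hvBell s, hvbBell sb]
    set a := ∫ s', v s' ∂(T s)
    set b := ∫ sb', ∫ s', v s' ∂(G sb') ∂(Tb sb)
    set c := ∫ sb', vb sb' ∂(Tb sb)
    rw [abs_le] at *
    constructor <;> nlinarith
  set A : Set ℝ := (fun q : Sb × S => |v q.2 - vb q.1|) '' Rel with hA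
  have hbdd : BddAbove A := by
    refine ⟨Vmax + C, ?_⟩
    rintro _ ⟨q, _, rfl⟩
    exact (abs_sub _ _).trans (add_le_add (hvbdd _) (hC _))
  have hle : ∀ sb s, (sb, s) ∈ Rel → |v s - vb sb| ≤ sSup A := fun sb s h =>
    le_csSup hbdd ⟨(sb, s), h, rfl⟩
  have hs : sSup A ≤ Real.sqrt εR + γ * Vmax * Real.sqrt εT + γ * sSup A := by
    refine csSup_le ⟨_, (sb0, s0), h0, rfl⟩ ?_
    rintro _ ⟨q, hq, rfl⟩
    exact step _ hle q.1 q.2 hq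
  refine (hle sb0 s0 h0).trans ?_
  rw [le_div_iff₀ (by linarith)]
  linarith
end

section
/- (One-step value loss, base case) Assume Rel is a support relation for G, v satisfies the ground Bellman equation with ‖v‖_∞ ≤ Vmax, and for every (s̄, s) ∈ Rel: ‖T(s) − T̃(s̄)‖₁² ≤ ε_T and |R(s) − R̄(s̄)|² ≤ ε_R. Define v̄₁(s̄) := R̄(s̄) + γ ∫ v dT̃(s̄). Then for every (s̄, s) ∈ Rel, |v(s) − v̄₁(s̄)| ≤ √ε_R + γ · Vmax · √ε_T. -/
open MeasureTheory ProbabilityTheory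

theorem abs_integral_sub_le_tvDist {α : Type*} [MeasurableSpace α] (μ ν : Measure α)
    [hμ : IsFiniteMeasure μ] [hν : IsFiniteMeasure ν] (f : α → ℝ) (hf : Measurable f) (C : ℝ)
    (hC : ∀ x, |f x| ≤ C) :
    |∫ x, f x ∂μ - ∫ x, f x ∂ν| ≤ C * tvDist μ ν := by
  have htv : tvDist μ ν = ((μ.toSignedMeasure - ν.toSignedMeasure).totalVariation
      Set.univ).toReal := by
    unfold tvDist
    rw [dif_pos ⟨hμ, hν⟩]
  set j := (μ.toSignedMeasure - ν.toSignedMeasure).toJordanDecomposition with hj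
  have hint : ∀ (ρ : Measure α) [IsFiniteMeasure ρ], Integrable f ρ := fun ρ _ =>
    Integrable.of_bound hf.aestronglyMeasurable C (Filter.Eventually.of_forall hC)
  have hb : ∀ (ρ : Measure α) [IsFiniteMeasure ρ], |∫ x, f x ∂ρ| ≤ C * ρ.real Set.univ :=
    fun ρ _ => by
      rw [← Real.norm_eq_abs]
      exact norm_integral_le_of_norm_le_const (Filter.Eventually.of_forall hC)
  have key : μ + j.negPart = ν + j.posPart := by
    ext A hA
    have h1 := SignedMeasure.apply_eq_posPart_real_sub_negPart_real
      (μ.toSignedMeasure - ν.toSignedMeasure) hA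
    rw [Measure.toSignedMeasure_sub_apply hA] at h1
    have h2 : (μ + j.negPart).real A = (ν + j.posPart).real A := by
      rw [measureReal_add_apply, measureReal_add_apply]
      linarith
    exact (measureReal_eq_measureReal_iff).1 h2
  have h3 : ∫ x, f x ∂μ + ∫ x, f x ∂j.negPart = ∫ x, f x ∂ν + ∫ x, f x ∂j.posPart := by
    rw [← integral_add_measure (hint _) (hint _), ← integral_add_measure (hint _) (hint _), key]
  have h4 : tvDist μ ν = j.posPart.real Set.univ + j.negPart.real Set.univ := by
    rw [htv, ← measureReal_add_apply]
    rfl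
  have h5 := abs_le.1 (hb j.posPart)
  have h6 := abs_le.1 (hb j.negPart)
  rw [h4, abs_le]
  constructor <;> linarith [h5.1, h5.2, h6.1, h6.2]

/-- One-step value loss, base case: under the support-relation hypotheses, with a
bounded solution `v` of the ground Bellman equation, the one-step abstract backup
`v̄₁(s̄) := R̄(s̄) + γ ∫ v dT̃(s̄)` (where `T̃(s̄) = (T̄ s̄).bind G`) satisfies
`|v(s) - v̄₁(s̄)| ≤ √ε_R + γ Vmax √ε_T` for every `(s̄, s) ∈ Rel`. -/
theorem one_step_value_loss
    {S Sb : Type*} [MeasurableSpace S] [MeasurableSpace Sb]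
    (T : Kernel S S) [IsMarkovKernel T]
    (Tb : Kernel Sb Sb) [IsMarkovKernel Tb]
    (G : Kernel Sb S) [IsMarkovKernel G]
    (γ : ℝ) (hγ0 : 0 ≤ γ) (hγ1 : γ < 1)
    (R : S → ℝ) (hRmeas : Measurable R) (hRbdd : ∃ C, ∀ s, |R s| ≤ C)
    (Rb : Sb → ℝ) (hRbmeas : Measurable Rb) (hRbbdd : ∃ C, ∀ sb, |Rb sb| ≤ C)
    (Rel : Set (Sb × S)) (hRelMeas : MeasurableSet Rel)
    (hRelSupp : ∀ sb, G sb {s | (sb, s) ∈ Rel} = 1)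
    (εT εR Vmax : ℝ) (hεT : 0 ≤ εT) (hεR : 0 ≤ εR) (hVmax : 0 ≤ Vmax)
    (v : S → ℝ) (hvmeas : Measurable v) (hvbdd : ∀ s, |v s| ≤ Vmax)
    (hvBell : ∀ s, v s = R s + γ * ∫ s', v s' ∂(T s))
    (hT : ∀ sb s, (sb, s) ∈ Rel →
      tvDist (T s) ((Tb sb).bind (fun sb' => G sb')) ^ 2 ≤ εT)
    (hR : ∀ sb s, (sb, s) ∈ Rel → |R s - Rb sb| ^ 2 ≤ εR) :
    ∀ sb s, (sb, s) ∈ Rel →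
      |v s - (Rb sb + γ * ∫ s', v s' ∂((Tb sb).bind (fun sb' => G sb')))| ≤
        Real.sqrt εR + γ * Vmax * Real.sqrt εT := by
  intro sb s hs
  haveI : IsProbabilityMeasure ((Tb sb).bind (fun sb' => G sb')) := by
    change IsProbabilityMeasure ((Tb sb).bind G)
    infer_instance
  have h1 := abs_integral_sub_le_tvDist (T s) ((Tb sb).bind (fun sb' => G sb')) v hvmeas Vmax hvbdd
  have h2 := Real.le_sqrt_of_sq_le (hT sb s hs)
  have h3 := Real.le_sqrt_of_sq_le (hR sb s hs)
  have h4 := mul_le_mul_of_nonneg_left (h1.trans (mul_le_mul_of_nonneg_left h2 hVmax)) hγ0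
  rw [hvBell s]
  calc _ = |(R s - Rb sb) + γ * (∫ s', v s' ∂(T s)
        - ∫ s', v s' ∂((Tb sb).bind (fun sb' => G sb')))| := by
        congr 1
        ring
    _ ≤ |R s - Rb sb| + |γ * (∫ s', v s' ∂(T s)
        - ∫ s', v s' ∂((Tb sb).bind (fun sb' => G sb')))| := abs_add_le _ _
    _ ≤ _ := by
        rw [abs_mul, abs_of_nonneg hγ0]
        linarith
end

section
/- (Value loss iterates, inductive bound) Assume Rel is a support relation for G, v satisfies the ground Bellman equation with ‖v‖_∞ ≤ Vmax, and for every (s̄, s) ∈ Rel: ‖T(s) − T̃(s̄)‖₁² ≤ ε_T and |R(s) − R̄(s̄)|² ≤ ε_R. Define the abstract value iterates v̄₀(s̄) := ∫ v dG(s̄) and v̄_{n+1}(s̄) := R̄(s̄) + γ ∫ v̄_n d(T̄ s̄). Then for every n ≥ 0 and every (s̄, s) ∈ Rel, |v(s) − v̄_{n+1}(s̄)| ≤ Σ_{i=0}^{n} γ^i · (√ε_R + γ · Vmax · √ε_T), and in particular |v(s) − v̄_{n+1}(s̄)| ≤ (√ε_R + γ · Vmax · √ε_T)/(1 − γ). 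-/
open MeasureTheory ProbabilityTheory

/-- The abstract value iterates: `v̄₀(s̄) = ∫ v dG(s̄)` and
`v̄_{n+1}(s̄) = R̄(s̄) + γ ∫ v̄_n d(T̄ s̄)`. -/
noncomputable def valueIter {S Sb : Type*} [MeasurableSpace S] [MeasurableSpace Sb]
    (Tb : Kernel Sb Sb) (G : Kernel Sb S) (Rb : Sb → ℝ) (γ : ℝ) (v : S → ℝ) :
    ℕ → Sb → ℝ
  | 0 => fun sb => ∫ s, v s ∂(G sb)
  | n + 1 => fun sb => Rb sb + γ * ∫ sb', valueIter Tb G Rb γ v n sb' ∂(Tb sb)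

lemma aux_integrable {α : Type*} [MeasurableSpace α] (μ : Measure α) [IsFiniteMeasure μ]
    (f : α → ℝ) (hf : Measurable f) (M : ℝ) (hM : ∀ x, |f x| ≤ M) : Integrable f μ :=
  Integrable.of_bound hf.aestronglyMeasurable M
    (Filter.Eventually.of_forall fun x => by simpa [Real.norm_eq_abs] using hM x)

lemma aux_tv {α : Type*} [MeasurableSpace α] (μ ν : Measure α) [h1 : IsFiniteMeasure μ]
    [h2 : IsFiniteMeasure ν] (f : α → ℝ) (hf : Measurable f) (M : ℝ)
    (hM : ∀ x, |f x| ≤ M) :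
    |∫ x, f x ∂μ - ∫ x, f x ∂ν| ≤ M * tvDist μ ν := by
  have hd : tvDist μ ν =
      ((μ.toSignedMeasure - ν.toSignedMeasure).totalVariation Set.univ).toReal := by
    unfold tvDist
    rw [dif_pos ⟨h1, h2⟩]
  rw [hd]
  set s := μ.toSignedMeasure - ν.toSignedMeasure with hs
  set p := s.toJordanDecomposition.posPart with hp
  set q := s.toJordanDecomposition.negPart with hq
  have hpq : μ + q = ν + p := by
    ext A hA
    have h3 : s A = p.real A - q.real A := by
      conv_lhs => rw [← s.toSignedMeasure_toJordanDecomposition]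
      rw [JordanDecomposition.toSignedMeasure, Measure.toSignedMeasure_sub_apply hA]
    have h4 : s A = μ.real A - ν.real A := Measure.toSignedMeasure_sub_apply hA
    have h5 : (μ + q).real A = (ν + p).real A := by
      rw [measureReal_add_apply, measureReal_add_apply]
      linarith
    exact (measureReal_eq_measureReal_iff).1 h5
  have I : ∀ (m : Measure α) [IsFiniteMeasure m], Integrable f m :=
    fun m _ => aux_integrable m f hf M hM
  have h6 : ∫ x, f x ∂μ + ∫ x, f x ∂q = ∫ x, f x ∂ν + ∫ x, f x ∂p := by
    rw [← integral_add_measure (I μ) (I q), ← integral_add_measure (I ν) (I p), hpq]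
  have h7 : (s.totalVariation Set.univ).toReal = p.real Set.univ + q.real Set.univ := by
    rw [SignedMeasure.totalVariation]
    exact measureReal_add_apply
  have B : ∀ (m : Measure α) [IsFiniteMeasure m], |∫ x, f x ∂m| ≤ M * m.real Set.univ := by
    intro m _
    have := norm_integral_le_of_norm_le_const (μ := m) (f := f) (C := M)
      (Filter.Eventually.of_forall fun x => by simpa [Real.norm_eq_abs] using hM x)
    simpa [Real.norm_eq_abs] using this
  have e : ∫ x, f x ∂μ - ∫ x, f x ∂ν = ∫ x, f x ∂p - ∫ x, f x ∂q := by linarith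
  rw [e, h7, mul_add]
  exact (abs_sub _ _).trans (add_le_add (B p) (B q))

lemma aux_abs_int {α : Type*} [MeasurableSpace α] (μ : Measure α) [IsProbabilityMeasure μ]
    (f : α → ℝ) (M : ℝ) (hM : ∀ᵐ x ∂μ, |f x| ≤ M) : |∫ x, f x ∂μ| ≤ M := by
  have := norm_integral_le_of_norm_le_const (μ := μ) (f := f) (C := M)
    (by simpa [Real.norm_eq_abs] using hM)
  simpa [Real.norm_eq_abs] using this

lemma aux_iter {S Sb : Type*} [MeasurableSpace S] [MeasurableSpace Sb]
    (Tb : Kernel Sb Sb) [IsMarkovKernel Tb] (G : Kernel Sb S) [IsMarkovKernel G]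
    (γ : ℝ) (hγ0 : 0 ≤ γ)
    (Rb : Sb → ℝ) (hRbmeas : Measurable Rb) (hRbbdd : ∃ C, ∀ sb, |Rb sb| ≤ C)
    (Vmax : ℝ) (v : S → ℝ) (hvmeas : Measurable v) (hvbdd : ∀ s, |v s| ≤ Vmax) (n : ℕ) :
    Measurable (valueIter Tb G Rb γ v n) ∧ ∃ C, ∀ sb, |valueIter Tb G Rb γ v n sb| ≤ C := by
  induction n with
  | zero =>
    exact ⟨(hvmeas.stronglyMeasurable.integral_kernel (κ := G)).measurable, Vmax,
      fun sb => aux_abs_int _ _ _ (Filter.Eventually.of_forall hvbdd)⟩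
  | succ n ih =>
    obtain ⟨hm, C, hC⟩ := ih
    obtain ⟨D, hD⟩ := hRbbdd
    refine ⟨hRbmeas.add
      ((hm.stronglyMeasurable.integral_kernel (κ := Tb)).measurable.const_mul γ),
      D + γ * C, fun sb => ?_⟩
    have h := aux_abs_int (Tb sb) _ _ (Filter.Eventually.of_forall hC)
    refine (abs_add_le _ _).trans (add_le_add (hD sb) ?_)
    rw [abs_mul, abs_of_nonneg hγ0]
    exact mul_le_mul_of_nonneg_left h hγ0

/-- Value loss iterates, inductive bound: under the support-relation hypotheses,
with a bounded solution `v` of the ground Bellman equation, the abstract value iterates satisfy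
`|v(s) - v̄_{n+1}(s̄)| ≤ (Σ_{i=0}^{n} γ^i) (√ε_R + γ Vmax √ε_T)` and in particular
`|v(s) - v̄_{n+1}(s̄)| ≤ (√ε_R + γ Vmax √ε_T)/(1-γ)` for every `(s̄, s) ∈ Rel`. -/
theorem value_loss_iterates
    {S Sb : Type*} [MeasurableSpace S] [MeasurableSpace Sb]
    (T : Kernel S S) [IsMarkovKernel T]
    (Tb : Kernel Sb Sb) [IsMarkovKernel Tb]
    (G : Kernel Sb S) [IsMarkovKernel G]
    (γ : ℝ) (hγ0 : 0 ≤ γ) (hγ1 : γ < 1)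
    (R : S → ℝ) (hRmeas : Measurable R) (hRbdd : ∃ C, ∀ s, |R s| ≤ C)
    (Rb : Sb → ℝ) (hRbmeas : Measurable Rb) (hRbbdd : ∃ C, ∀ sb, |Rb sb| ≤ C)
    (Rel : Set (Sb × S)) (hRelMeas : MeasurableSet Rel)
    (hRelSupp : ∀ sb, G sb {s | (sb, s) ∈ Rel} = 1)
    (εT εR Vmax : ℝ) (hεT : 0 ≤ εT) (hεR : 0 ≤ εR) (hVmax : 0 ≤ Vmax)
    (v : S → ℝ) (hvmeas : Measurable v) (hvbdd : ∀ s, |v s| ≤ Vmax)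
    (hvBell : ∀ s, v s = R s + γ * ∫ s', v s' ∂(T s))
    (hT : ∀ sb s, (sb, s) ∈ Rel →
      tvDist (T s) ((Tb sb).bind (fun sb' => G sb')) ^ 2 ≤ εT)
    (hR : ∀ sb s, (sb, s) ∈ Rel → |R s - Rb sb| ^ 2 ≤ εR) :
    ∀ (n : ℕ) (sb : Sb) (s : S), (sb, s) ∈ Rel →
      (|v s - valueIter Tb G Rb γ v (n + 1) sb| ≤
        (∑ i ∈ Finset.range (n + 1), γ ^ i) *
          (Real.sqrt εR + γ * Vmax * Real.sqrt εT)) ∧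
      |v s - valueIter Tb G Rb γ v (n + 1) sb| ≤
        (Real.sqrt εR + γ * Vmax * Real.sqrt εT) / (1 - γ) := by
  set c := Real.sqrt εR + γ * Vmax * Real.sqrt εT with hc
  have hc0 : 0 ≤ c := by positivity
  have hit := aux_iter Tb G γ hγ0 Rb hRbmeas hRbbdd Vmax v hvmeas hvbdd
  have hIv : ∀ (m : Measure S) [IsFiniteMeasure m], Integrable v m :=
    fun m _ => aux_integrable m v hvmeas Vmax hvbdd
  -- one step
  have step : ∀ (n : ℕ) (B : ℝ),
      (∀ sb, |valueIter Tb G Rb γ v 0 sb - valueIter Tb G Rb γ v n sb| ≤ B) →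
      ∀ sb s, (sb, s) ∈ Rel → |v s - valueIter Tb G Rb γ v (n + 1) sb| ≤ c + γ * B := by
    intro n B hB sb s hrel
    have hm : (Tb sb).bind (fun sb' => G sb') = (G ∘ₖ Tb) sb := by
      rw [Kernel.comp_apply]
    have h1 := hT sb s hrel
    rw [hm] at h1
    have h2 : tvDist (T s) ((G ∘ₖ Tb) sb) ≤ Real.sqrt εT := Real.le_sqrt_of_sq_le h1
    have h3 := aux_tv (T s) ((G ∘ₖ Tb) sb) v hvmeas Vmax hvbdd
    rw [Kernel.integral_comp (hIv _)] at h3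
    have h4 : |R s - Rb sb| ≤ Real.sqrt εR := Real.le_sqrt_of_sq_le (hR sb s hrel)
    obtain ⟨m0, C0, hC0⟩ := hit 0
    obtain ⟨mn, Cn, hCn⟩ := hit n
    have h5 := aux_abs_int (Tb sb) _ _ (Filter.Eventually.of_forall hB)
    rw [integral_sub (aux_integrable _ _ m0 C0 hC0) (aux_integrable _ _ mn Cn hCn)] at h5
    have h6 : |∫ x, v x ∂(T s) - ∫ x, valueIter Tb G Rb γ v 0 x ∂(Tb sb)|
        ≤ Vmax * Real.sqrt εT := h3.trans (mul_le_mul_of_nonneg_left h2 hVmax)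
    have h7 : v s - valueIter Tb G Rb γ v (n + 1) sb = (R s - Rb sb)
        + γ * ((∫ x, v x ∂(T s) - ∫ x, valueIter Tb G Rb γ v 0 x ∂(Tb sb))
        + (∫ x, valueIter Tb G Rb γ v 0 x ∂(Tb sb)
          - ∫ x, valueIter Tb G Rb γ v n x ∂(Tb sb))) := by
      rw [hvBell s]
      simp only [valueIter]
      ring
    rw [h7]
    refine (abs_add_le _ _).trans ?_
    rw [abs_mul, abs_of_nonneg hγ0]
    have h8 := mul_le_mul_of_nonneg_left ((abs_add_le _ _).trans (add_le_add h6 h5)) hγ0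
    calc _ ≤ Real.sqrt εR + γ * (Vmax * Real.sqrt εT + B) := add_le_add h4 h8
      _ = c + γ * B := by rw [hc]; ring
  have lift : ∀ (n : ℕ) (B : ℝ),
      (∀ sb s, (sb, s) ∈ Rel → |v s - valueIter Tb G Rb γ v n sb| ≤ B) →
      ∀ sb, |valueIter Tb G Rb γ v 0 sb - valueIter Tb G Rb γ v n sb| ≤ B := by
    intro n B hB sb
    have hms : MeasurableSet {s | (sb, s) ∈ Rel} := measurable_prodMk_left hRelMeas
    have hae : ∀ᵐ s ∂(G sb), (sb, s) ∈ Rel :=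
      (mem_ae_iff_prob_eq_one hms).2 (hRelSupp sb)
    have h := aux_abs_int (G sb) (fun s => v s - valueIter Tb G Rb γ v n sb) B
      (hae.mono fun s hs => hB sb s hs)
    rw [integral_sub (hIv _) (integrable_const _)] at h
    simpa [valueIter] using h
  have main : ∀ (n : ℕ) (sb : Sb) (s : S), (sb, s) ∈ Rel →
      |v s - valueIter Tb G Rb γ v (n + 1) sb| ≤ (∑ i ∈ Finset.range (n + 1), γ ^ i) * c := by
    intro n
    induction n with
    | zero =>
      intro sb s hrel
      have := step 0 0 (by simp) sb s hrel
      simpa using this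
    | succ n ih =>
      intro sb s hrel
      have := step (n + 1) _ (lift (n + 1) _ ih) sb s hrel
      refine this.trans (le_of_eq ?_)
      rw [geom_sum_succ (n := n + 1)]
      ring
  intro n sb s hrel
  refine ⟨main n sb s hrel, (main n sb s hrel).trans ?_⟩
  have hpos : 0 < 1 - γ := by linarith
  rw [le_div_iff₀ hpos]
  have hg := geom_sum_mul_neg γ (n + 1)
  have hp : 0 ≤ γ ^ (n + 1) := pow_nonneg hγ0 _
  calc _ = ((∑ i ∈ Finset.range (n + 1), γ ^ i) * (1 - γ)) * c := by ring
    _ ≤ 1 * c := mul_le_mul_of_nonneg_right (by rw [hg]; linarith) hc0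
    _ = c := one_mul c
end

section
/- (Information loss is expected KL divergence) Let (S, O, S') be random variables with S, S' valued in standard Borel spaces, O valued in a finite set, φ : S-space → Z-space measurable, and set Z := φ(S). Assume MI(S'; (S,O)) < ∞. Let κ_{(s,o)} denote the regular conditional distribution of S' given (S,O) = (s,o), and κ̃_{(z,o)} the regular conditional distribution of S' given (Z,O) = (z,o). Then the information lost by compressing S through φ equals the expected KL divergence between the true and abstracted transition distributions: MI(S'; (S,O)) − MI(S'; (Z,O)) = ∫ klDiv(κ_{(s,o)}, κ̃_{(φ(s),o)}) dμ_{(S,O)}(s,o). -/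
open MeasureTheory ProbabilityTheory
open scoped ENNReal

/-- Kullback–Leibler divergence (natural logarithm), valued in `ℝ≥0∞`: it is
`∫ log (dμ/dν) dμ` when `μ ≪ ν` and the log-likelihood ratio is integrable, and `∞`
otherwise. -/
noncomputable def klDiv {α : Type*} [MeasurableSpace α] (μ ν : Measure α) : ℝ≥0∞ :=
  open scoped Classical in
  if μ ≪ ν ∧ Integrable (llr μ ν) μ then ENNReal.ofReal (∫ x, llr μ ν x ∂μ) else ∞

/-- Mutual information `MI(X;Y) := klDiv (law of (X,Y)) ((law of X) ⊗ (law of Y))`. -/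
noncomputable def mutualInfo {Ω 𝓧 𝓨 : Type*} [MeasurableSpace Ω] [MeasurableSpace 𝓧]
    [MeasurableSpace 𝓨] (μ : Measure Ω) (X : Ω → 𝓧) (Y : Ω → 𝓨) : ℝ≥0∞ :=
  klDiv (μ.map (fun ω => (X ω, Y ω))) ((μ.map X).prod (μ.map Y))

namespace InfoLoss

lemma klDiv_eq {α : Type*} [MeasurableSpace α] (μ ν : Measure α)
    [IsProbabilityMeasure μ] [IsProbabilityMeasure ν] :
    klDiv μ ν = InformationTheory.klDiv μ ν := by
  classical
  rw [InformationTheory.klDiv_def, klDiv]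
  simp

lemma kl_map_inv {α β : Type*} [MeasurableSpace α] [MeasurableSpace β] (μ ν : Measure α)
    [IsProbabilityMeasure μ] [IsProbabilityMeasure ν] {g : α → β} {h : β → α}
    (hg : Measurable g) (hh : Measurable h) (hgh : ∀ a, h (g a) = a) :
    InformationTheory.klDiv (μ.map g) (ν.map g) = InformationTheory.klDiv μ ν := by
  apply le_antisymm (InformationTheory.klDiv_map_le μ ν hg)
  have : IsProbabilityMeasure (μ.map g) := Measure.isProbabilityMeasure_map hg.aemeasurable
  have : IsProbabilityMeasure (ν.map g) := Measure.isProbabilityMeasure_map hg.aemeasurable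
  have h1 := InformationTheory.klDiv_map_le (μ.map g) (ν.map g) hh
  have e : h ∘ g = id := funext hgh
  rwa [Measure.map_map hh hg, Measure.map_map hh hg, e, Measure.map_id, Measure.map_id] at h1

lemma kl_kernel {α β : Type*} [MeasurableSpace α] [MeasurableSpace β]
    [MeasurableSpace.CountablyGenerated β] (P : Measure α) [IsProbabilityMeasure P]
    (κ η : Kernel α β) [IsMarkovKernel κ] [IsMarkovKernel η] (hac : P ⊗ₘ κ ≪ P ⊗ₘ η) :
    InformationTheory.klDiv (P ⊗ₘ κ) (P ⊗ₘ η)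
      = ∫⁻ a, InformationTheory.klDiv (κ a) (η a) ∂P := by
  have hk : ∀ᵐ a ∂P, κ a ≪ η a := Measure.absolutelyContinuous_compProd_right_iff.1 hac
  have hm : Measurable (Function.uncurry (Kernel.rnDeriv κ η)) := Kernel.measurable_rnDeriv κ η
  have hwd : P ⊗ₘ κ = (P ⊗ₘ η).withDensity (Function.uncurry (Kernel.rnDeriv κ η)) := by
    ext s hs
    rw [withDensity_apply _ hs, ← lintegral_indicator hs,
      Measure.lintegral_compProd (hm.indicator hs), Measure.compProd_apply hs]
    apply lintegral_congr_ae
    filter_upwards [hk] with a ha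
    have hs' : MeasurableSet (Prod.mk a ⁻¹' s) := measurable_prodMk_left hs
    rw [← Kernel.setLIntegral_rnDeriv ha hs', ← lintegral_indicator hs']
    rfl
  have hrn : (P ⊗ₘ κ).rnDeriv (P ⊗ₘ η) =ᵐ[P ⊗ₘ η] Function.uncurry (Kernel.rnDeriv κ η) := by
    rw [hwd]
    exact Measure.rnDeriv_withDensity _ hm
  rw [InformationTheory.klDiv_eq_lintegral_klFun_of_ac hac]
  rw [lintegral_congr_ae (g := fun p => ENNReal.ofReal
    (InformationTheory.klFun (Function.uncurry (Kernel.rnDeriv κ η) p).toReal))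
    (by filter_upwards [hrn] with p hp; rw [hp])]
  rw [Measure.lintegral_compProd (by fun_prop)]
  apply lintegral_congr_ae
  filter_upwards [hk] with a ha
  rw [InformationTheory.klDiv_eq_lintegral_klFun_of_ac ha]
  apply lintegral_congr_ae
  filter_upwards [Kernel.rnDeriv_eq_rnDeriv_measure (κ := κ) (η := η) (a := a)] with b hb
  simp only [Function.uncurry_apply_pair, hb]

lemma key {X Y B : Type*} [MeasurableSpace X] [StandardBorelSpace X] [Nonempty X]
    [MeasurableSpace Y] [MeasurableSpace B] (P : Measure X) [IsProbabilityMeasure P]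
    (f : X → Y) (hf : Measurable f) (η : Kernel Y B) [IsMarkovKernel η] :
    ((P.map f) ⊗ₘ η) ⊗ₘ ((condDistrib id f P).comap (Prod.fst : Y × B → Y) measurable_fst)
      = (P ⊗ₘ (η.comap f hf)).map (fun p => ((f p.1, p.2), p.1)) := by
  have : IsProbabilityMeasure (P.map f) := Measure.isProbabilityMeasure_map hf.aemeasurable
  refine Measure.ext_of_lintegral _ fun h hh => ?_
  have hg : Measurable (fun p : X × B => ((f p.1, p.2), p.1)) := by fun_prop
  rw [lintegral_map hh hg, Measure.lintegral_compProd hh,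
    Measure.lintegral_compProd (f := fun p : X × B => h ((f p.1, p.2), p.1)) (hh.comp hg),
    Measure.lintegral_compProd (Measurable.lintegral_kernel_prod_right' hh)]
  simp only [Kernel.comap_apply]
  have h1 : ∀ y, ∫⁻ b, ∫⁻ x, h ((y, b), x) ∂(condDistrib id f P y) ∂(η y)
      = ∫⁻ x, ∫⁻ b, h ((y, b), x) ∂(η y) ∂(condDistrib id f P y) := fun y =>
    lintegral_lintegral_swap (by
      apply Measurable.aemeasurable
      exact hh.comp (by fun_prop))
  simp_rw [h1]
  have hG : Measurable (fun p : Y × X => ∫⁻ b, h ((p.1, b), p.2) ∂(η p.1)) := by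
    have : Measurable (fun q : (Y × X) × B => h ((q.1.1, q.2), q.1.2)) := hh.comp (by fun_prop)
    exact Measurable.lintegral_kernel_prod_right' (κ := η.comap (Prod.fst : Y × X → Y) measurable_fst) this
  rw [← Measure.lintegral_compProd (κ := condDistrib id f P) hG,
    compProd_map_condDistrib aemeasurable_id, lintegral_map hG (by fun_prop)]
  rfl

lemma main {Ω X Y B : Type*} [MeasurableSpace Ω]
    [MeasurableSpace X] [StandardBorelSpace X] [Nonempty X]
    [MeasurableSpace Y] [MeasurableSpace B] [StandardBorelSpace B] [Nonempty B]
    (μ : Measure Ω) [IsProbabilityMeasure μ] (x : Ω → X) (b : Ω → B) (hx : Measurable x)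
    (hb : Measurable b) (f : X → Y) (hf : Measurable f) (hfin : mutualInfo μ b x < ∞) :
    mutualInfo μ b x - mutualInfo μ b (fun ω => f (x ω)) =
      ∫⁻ p, klDiv (condDistrib b x μ p) (condDistrib b (fun ω => f (x ω)) μ (f p)) ∂(μ.map x) := by
  have hfx : Measurable (fun ω => f (x ω)) := hf.comp hx
  have i1 : IsProbabilityMeasure (μ.map x) := Measure.isProbabilityMeasure_map hx.aemeasurable
  have i2 : IsProbabilityMeasure (μ.map b) := Measure.isProbabilityMeasure_map hb.aemeasurable
  have i3 : IsProbabilityMeasure (μ.map (fun ω => f (x ω))) :=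
    Measure.isProbabilityMeasure_map hfx.aemeasurable
  have i4 : IsProbabilityMeasure (μ.map (fun ω => (b ω, x ω))) :=
    Measure.isProbabilityMeasure_map (by fun_prop)
  have i5 : IsProbabilityMeasure (μ.map (fun ω => (b ω, f (x ω)))) :=
    Measure.isProbabilityMeasure_map (by fun_prop)
  have i6 : IsProbabilityMeasure (μ.map (fun ω => (f (x ω), b ω))) :=
    Measure.isProbabilityMeasure_map (by fun_prop)
  have hmapf : (μ.map x).map f = μ.map (fun ω => f (x ω)) := Measure.map_map hf hx
  set P := μ.map x with hP
  set η := condDistrib b (fun ω => f (x ω)) μ with hη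
  set κ := condDistrib b x μ with hκ
  set γ := (condDistrib id f P).comap (Prod.fst : Y × B → Y) measurable_fst with hγ
  set κ' := condDistrib x (fun ω => (f (x ω), b ω)) μ with hκ'
  set g : X × B → (Y × B) × X := fun p => ((f p.1, p.2), p.1) with hgdef
  have hg : Measurable g := by fun_prop
  have hh : Measurable (fun q : (Y × B) × X => (q.2, q.1.2)) := by fun_prop
  have keyη := key P f hf η
  have keyρ := key P f hf (Kernel.const Y (μ.map b))
  have hκe : P ⊗ₘ κ = μ.map (fun ω => (x ω, b ω)) := compProd_map_condDistrib hb.aemeasurable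
  have hηe : (P.map f) ⊗ₘ η = μ.map (fun ω => (f (x ω), b ω)) := by
    rw [hmapf]; exact compProd_map_condDistrib hb.aemeasurable
  have hJ : μ.map (fun ω => (f (x ω), b ω)) ⊗ₘ κ' = (P ⊗ₘ κ).map g := by
    rw [hκe, Measure.map_map hg (by fun_prop)]
    exact compProd_map_condDistrib hx.aemeasurable
  have hcc : (Kernel.const Y (μ.map b)).comap f hf = Kernel.const X (μ.map b) := by
    ext; simp
  rw [hcc, Measure.compProd_const, Measure.compProd_const, hmapf] at keyρ
  rw [hηe] at keyη
  have M1 : mutualInfo μ b x = InformationTheory.klDiv (P ⊗ₘ κ) (P.prod (μ.map b)) := by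
    rw [mutualInfo, klDiv_eq, ← kl_map_inv _ _ measurable_swap measurable_swap Prod.swap_swap,
      Measure.prod_swap, Measure.map_map measurable_swap (by fun_prop), hκe]
    rfl
  have M2 : mutualInfo μ b (fun ω => f (x ω)) = InformationTheory.klDiv
      (μ.map (fun ω => (f (x ω), b ω))) ((μ.map (fun ω => f (x ω))).prod (μ.map b)) := by
    rw [mutualInfo, klDiv_eq, ← kl_map_inv _ _ measurable_swap measurable_swap Prod.swap_swap,
      Measure.prod_swap, Measure.map_map measurable_swap (by fun_prop)]
    rfl
  have chain := InformationTheory.klDiv_compProd_eq_add (μ.map (fun ω => (f (x ω), b ω)))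
    ((μ.map (fun ω => f (x ω))).prod (μ.map b)) κ' γ
  rw [hJ, keyρ, keyη, kl_map_inv _ _ hg hh (fun _ => rfl), kl_map_inv _ _ hg hh (fun _ => rfl),
    ← M1, ← M2] at chain
  have hne : mutualInfo μ b (fun ω => f (x ω)) ≠ ∞ := by
    rintro e; rw [chain, e] at hfin; simp at hfin
  have hne2 : InformationTheory.klDiv (P ⊗ₘ κ) (P ⊗ₘ η.comap f hf) ≠ ∞ := by
    rintro e; rw [chain, e] at hfin; simp at hfin
  rw [chain, ENNReal.add_sub_cancel_left hne,
    kl_kernel _ _ _ (InformationTheory.klDiv_ne_top_iff.1 hne2).1]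
  refine lintegral_congr fun p => ?_
  rw [klDiv_eq, Kernel.comap_apply]

end InfoLoss

/-- Information loss is expected KL divergence: with `Z := φ(S)` and
`MI(S'; (S,O)) < ∞`, the information lost by compressing `S` through `φ` equals the expected KL
divergence between the true transition distribution `κ_{(s,o)}` (the regular conditional
distribution of `S'` given `(S,O) = (s,o)`) and the abstracted one `κ̃_{(φ(s),o)}` (the regular
conditional distribution of `S'` given `(Z,O) = (z,o)`):
`MI(S'; (S,O)) − MI(S'; (Z,O)) = ∫ klDiv(κ_{(s,o)}, κ̃_{(φ(s),o)}) dμ_{(S,O)}(s,o)`. -/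
theorem information_loss_eq_expected_klDiv
    {Ω 𝒮 𝒵 O : Type*} [MeasurableSpace Ω]
    [MeasurableSpace 𝒮] [StandardBorelSpace 𝒮] [Nonempty 𝒮]
    [MeasurableSpace 𝒵] [StandardBorelSpace 𝒵] [Nonempty 𝒵]
    [Fintype O] [MeasurableSpace O] [DiscreteMeasurableSpace O] [Nonempty O]
    (μ : Measure Ω) [IsProbabilityMeasure μ]
    (St : Ω → 𝒮) (Op : Ω → O) (S' : Ω → 𝒮)
    (hSt : Measurable St) (hOp : Measurable Op) (hS' : Measurable S')
    (φ : 𝒮 → 𝒵) (hφ : Measurable φ)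
    (hfin : mutualInfo μ S' (fun ω => (St ω, Op ω)) < ∞) :
    mutualInfo μ S' (fun ω => (St ω, Op ω)) -
        mutualInfo μ S' (fun ω => (φ (St ω), Op ω)) =
      ∫⁻ p, klDiv (condDistrib S' (fun ω => (St ω, Op ω)) μ p)
          (condDistrib S' (fun ω => (φ (St ω), Op ω)) μ (φ p.1, p.2))
        ∂(μ.map (fun ω => (St ω, Op ω))) := by
  exact InfoLoss.main μ (fun ω => (St ω, Op ω)) S' (by fun_prop) hS'
    (fun p : 𝒮 × O => (φ p.1, p.2)) (by fun_prop) hfin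
end

section
/- (Information loss lower-bounds transition error) Let (S, O, S') be random variables with S, S' valued in standard Borel spaces, O valued in a finite set, φ : S-space → Z-space measurable, and set Z := φ(S). Assume MI(S'; (S,O)) < ∞. Let κ_{(s,o)} be the regular conditional distribution of S' given (S,O) = (s,o) and κ̃_{(z,o)} that of S' given (Z,O) = (z,o). Then MI(S'; (S,O)) − MI(S'; (Z,O)) ≥ (1/2) · ∫ ‖κ_{(s,o)} − κ̃_{(φ(s),o)}‖₁² dμ_{(S,O)}(s,o); that is, the mutual information gap upper-bounds (up to the Pinsker constant 1/2 for natural-logarithm KL) the expected squared total-variation error of the abstracted transition dynamics. -/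
open MeasureTheory ProbabilityTheory
open scoped ENNReal

open InformationTheory (klFun)

lemma aux_p_mono : MonotoneOn (fun x : ℝ => (x + 1) * Real.log x - 2 * (x - 1)) (Set.Ioi 0) := by
  have hd : ∀ x : ℝ, 0 < x → HasDerivAt (fun x : ℝ => (x + 1) * Real.log x - 2 * (x - 1))
      (1 * Real.log x + (x + 1) * x⁻¹ - 2 * 1) x := fun x hx =>
    (((hasDerivAt_id x).add_const 1).mul (Real.hasDerivAt_log hx.ne')).sub
      (((hasDerivAt_id x).sub_const 1).const_mul 2)
  refine monotoneOn_of_deriv_nonneg (convex_Ioi 0)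
    (fun x hx => (hd x hx).continuousAt.continuousWithinAt) ?_ ?_
  · rw [interior_Ioi]
    exact fun x hx => (hd x hx).differentiableAt.differentiableWithinAt
  · rw [interior_Ioi]
    intro x hx
    have hx : 0 < x := hx
    rw [(hd x hx).deriv]
    have h1 := Real.one_sub_inv_le_log_of_pos hx
    have h2 : (x + 1) * x⁻¹ = 1 + x⁻¹ := by field_simp
    rw [h2]; linarith

lemma aux_g_deriv (x : ℝ) (hx : 0 < x) :
    HasDerivAt (fun x : ℝ => (2 * x + 4) * (x * Real.log x + 1 - x) - 3 * (x - 1) ^ 2)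
      (4 * ((x + 1) * Real.log x - 2 * (x - 1))) x := by
  have h1 : HasDerivAt (fun x : ℝ => 2 * x + 4) (2 * 1) x :=
    ((hasDerivAt_id x).const_mul 2).add_const 4
  have h2 : HasDerivAt (fun x : ℝ => x * Real.log x + 1 - x) (Real.log x + 1 - 1) x :=
    ((Real.hasDerivAt_mul_log hx.ne').add_const 1).sub (hasDerivAt_id x)
  have h3 : HasDerivAt (fun x : ℝ => 3 * (x - 1) ^ 2) (3 * (2 * (x - 1))) x := by
    have := (((hasDerivAt_id x).sub_const 1).pow 2).const_mul 3
    simpa using this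
  refine ((h1.mul h2).sub h3).congr_deriv ?_
  ring

lemma aux_scalar {x : ℝ} (hx : 0 ≤ x) : 3 * (x - 1) ^ 2 ≤ (2 * x + 4) * klFun x := by
  rw [InformationTheory.klFun_apply]
  rcases hx.eq_or_lt with rfl | hx
  · norm_num
  set g : ℝ → ℝ := fun x : ℝ => (2 * x + 4) * (x * Real.log x + 1 - x) - 3 * (x - 1) ^ 2 with hg
  suffices h : g 1 ≤ g x by
    have : g 1 = 0 := by simp [hg]
    rw [this] at h
    simp only [hg] at h
    linarith
  rcases le_total 1 x with h1 | h1
  · have : MonotoneOn g (Set.Ici 1) := by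
      refine monotoneOn_of_deriv_nonneg (convex_Ici 1)
        (fun y hy => (aux_g_deriv y (lt_of_lt_of_le one_pos hy)).continuousAt.continuousWithinAt)
        ?_ ?_
      · rw [interior_Ici]
        exact fun y hy =>
          (aux_g_deriv y (one_pos.trans hy)).differentiableAt.differentiableWithinAt
      · rw [interior_Ici]
        intro y hy
        have hy : 1 < y := hy
        rw [(aux_g_deriv y (one_pos.trans hy)).deriv]
        have := aux_p_mono (Set.mem_Ioi.2 one_pos) (Set.mem_Ioi.2 (one_pos.trans hy)) hy.le
        simp at this
        simp; exact this
    exact this (Set.mem_Ici.2 le_rfl) (Set.mem_Ici.2 h1) h1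
  · have : AntitoneOn g (Set.Ioc 0 1) := by
      refine antitoneOn_of_deriv_nonpos (convex_Ioc 0 1)
        (fun y hy => (aux_g_deriv y hy.1).continuousAt.continuousWithinAt)
        ?_ ?_
      · rw [interior_Ioc]
        exact fun y hy =>
          (aux_g_deriv y hy.1).differentiableAt.differentiableWithinAt
      · rw [interior_Ioc]
        intro y hy
        rw [(aux_g_deriv y hy.1).deriv]
        have := aux_p_mono (Set.mem_Ioi.2 hy.1) (Set.mem_Ioi.2 one_pos) hy.2.le
        simp at this
        linarith
    exact this ⟨hx, h1⟩ ⟨one_pos, le_rfl⟩ h1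

lemma aux_pointwise {x : ℝ} (hx : 0 ≤ x) (t : ℝ) :
    t * |x - 1| ≤ t ^ 2 * ((x + 2) / 3) + klFun x / 2 := by
  have h := aux_scalar hx
  have ha : 0 < (x + 2) / 3 := by positivity
  have h2 : |x - 1| ^ 2 = (x - 1) ^ 2 := sq_abs _
  have h3 : 0 ≤ (t * ((x + 2) / 3) - |x - 1| / 2) ^ 2 := sq_nonneg _
  have h4 : ((x + 2) / 3) * (t * |x - 1|) ≤
      ((x + 2) / 3) * (t ^ 2 * ((x + 2) / 3) + klFun x / 2) := by
    nlinarith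
  exact le_of_mul_le_mul_left h4 ha

lemma aux_tv_s11 {α : Type*} [MeasurableSpace α] (P Q : Measure α) [IsFiniteMeasure P]
    [IsFiniteMeasure Q] : ∃ i, MeasurableSet i ∧
      tvDist P Q = (P.real i - Q.real i) - (P.real iᶜ - Q.real iᶜ) := by
  set s := P.toSignedMeasure - Q.toSignedMeasure with hs
  obtain ⟨i, hi, hi2, hi3, hp, hn⟩ := s.toJordanDecomposition_spec
  refine ⟨i, hi, ?_⟩
  rw [tvDist, dif_pos ⟨‹_›, ‹_›⟩, ← hs, SignedMeasure.totalVariation, hp, hn, Measure.add_apply,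
    SignedMeasure.toMeasureOfZeroLE_apply _ _ _ MeasurableSet.univ,
    SignedMeasure.toMeasureOfLEZero_apply _ _ _ MeasurableSet.univ,
    ENNReal.toReal_add (by simp) (by simp)]
  simp [hs, Measure.toSignedMeasure_apply, hi, hi.compl]
  ring

lemma aux_pinsker {α : Type*} [MeasurableSpace α] (P Q : Measure α) [IsProbabilityMeasure P]
    [IsProbabilityMeasure Q] :
    (1 / 2) * ENNReal.ofReal (tvDist P Q ^ 2) ≤ InformationTheory.klDiv P Q := by
  by_cases htop : InformationTheory.klDiv P Q = ∞
  · simp [htop]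
  obtain ⟨hac, hint⟩ := InformationTheory.klDiv_ne_top_iff.1 htop
  rw [InformationTheory.klDiv_eq_integral_klFun, if_pos ⟨hac, hint⟩]
  have hK : Integrable (fun x => klFun (P.rnDeriv Q x).toReal) Q :=
    (InformationTheory.integrable_klFun_rnDeriv_iff hac).2 hint
  have hf : Integrable (fun x => (P.rnDeriv Q x).toReal) Q := Measure.integrable_toReal_rnDeriv
  have hf1 : Integrable (fun x => (P.rnDeriv Q x).toReal - 1) Q := hf.sub (integrable_const 1)
  set K := ∫ x, klFun (P.rnDeriv Q x).toReal ∂Q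
  obtain ⟨i, hi, htv⟩ := aux_tv_s11 P Q
  have hset : ∀ j, P.real j - Q.real j = ∫ x in j, ((P.rnDeriv Q x).toReal - 1) ∂Q := by
    intro j
    rw [integral_sub hf.integrableOn (integrable_const 1).integrableOn,
      Measure.setIntegral_toReal_rnDeriv hac]
    simp
  have h1 : tvDist P Q ≤ ∫ x, |(P.rnDeriv Q x).toReal - 1| ∂Q := by
    rw [htv, hset, hset, ← integral_add_compl hi hf1.abs]
    have a := abs_integral_le_integral_abs (μ := Q.restrict i)
      (f := fun x => (P.rnDeriv Q x).toReal - 1)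
    have b := abs_integral_le_integral_abs (μ := Q.restrict iᶜ)
      (f := fun x => (P.rnDeriv Q x).toReal - 1)
    linarith [(abs_le.1 a).2, (abs_le.1 b).1, le_abs_self (∫ x in i, ((P.rnDeriv Q x).toReal - 1) ∂Q), neg_abs_le (∫ x in iᶜ, ((P.rnDeriv Q x).toReal - 1) ∂Q)]
  have h0 : 0 ≤ tvDist P Q := by
    rw [tvDist]; split_ifs <;> simp
  set T := tvDist P Q
  have h2 : ∫ x, T / 2 * |(P.rnDeriv Q x).toReal - 1| ∂Q ≤
      ∫ x, ((T / 2) ^ 2 * (((P.rnDeriv Q x).toReal + 2) / 3)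
        + klFun (P.rnDeriv Q x).toReal / 2) ∂Q := by
    refine integral_mono (hf1.abs.const_mul _) ?_ (fun x => aux_pointwise ENNReal.toReal_nonneg _)
    exact (((hf.add (integrable_const 2)).div_const 3).const_mul _).add (hK.div_const 2)
  have h3 : ∫ x, (P.rnDeriv Q x).toReal ∂Q = 1 := by
    rw [Measure.integral_toReal_rnDeriv hac]; simp
  have hA : Integrable (fun x => (T / 2) ^ 2 * (((P.rnDeriv Q x).toReal + 2) / 3)) Q :=
    ((hf.add (integrable_const 2)).div_const 3).const_mul _
  rw [integral_const_mul, integral_add hA (hK.div_const 2),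
    integral_const_mul, integral_div, integral_div, integral_add hf (integrable_const 2), h3] at h2
  simp at h2
  have h4 : T / 2 * T ≤ T / 2 * ∫ x, |(P.rnDeriv Q x).toReal - 1| ∂Q :=
    mul_le_mul_of_nonneg_left h1 (by positivity)
  have h5 : (1 / 2) * T ^ 2 ≤ K := by
    have : ∫ x, klFun (P.rnDeriv Q x).toReal ∂Q = K := rfl
    rw [this] at h2
    nlinarith
  calc (1 / 2 : ℝ≥0∞) * ENNReal.ofReal (T ^ 2) = ENNReal.ofReal ((1 / 2) * T ^ 2) := by
        rw [ENNReal.ofReal_mul (by norm_num)]; congr 1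
        rw [ENNReal.ofReal_div_of_pos (by norm_num)]; simp
    _ ≤ _ := ENNReal.ofReal_le_ofReal h5

lemma aux_kl_compProd {α β : Type*} [MeasurableSpace α] [MeasurableSpace β]
    [MeasurableSpace.CountableOrCountablyGenerated α β] (ρ : Measure α) [IsProbabilityMeasure ρ]
    (κ η : Kernel α β) [IsMarkovKernel κ] [IsMarkovKernel η] :
    ∫⁻ a, InformationTheory.klDiv (κ a) (η a) ∂ρ ≤ InformationTheory.klDiv (ρ ⊗ₘ κ) (ρ ⊗ₘ η) := by
  by_cases hac : ρ ⊗ₘ κ ≪ ρ ⊗ₘ η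
  swap
  · simp [hac]
  have h_ac : ∀ᵐ a ∂ρ, κ a ≪ η a := hac.kernel_of_compProd
  have hκ_eq : ∀ᵐ a ∂ρ, κ a = η.withDensity (κ.rnDeriv η) a := by
    filter_upwards [h_ac] with a ha using (Kernel.withDensity_rnDeriv_eq ha).symm
  have hm : Measurable (Function.uncurry (κ.rnDeriv η)) := Kernel.measurable_rnDeriv κ η
  have h1 : ρ ⊗ₘ κ = (ρ ⊗ₘ η).withDensity (fun p => κ.rnDeriv η p.1 p.2) := by
    rw [Measure.compProd_congr hκ_eq, Measure.compProd_withDensity hm]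
  have h2 : (ρ ⊗ₘ κ).rnDeriv (ρ ⊗ₘ η) =ᵐ[ρ ⊗ₘ η] fun p => κ.rnDeriv η p.1 p.2 := by
    conv_lhs => rw [h1]
    exact Measure.rnDeriv_withDensity _ hm
  rw [InformationTheory.klDiv_eq_lintegral_klFun_of_ac hac]
  have h3 : ∫⁻ x, ENNReal.ofReal (klFun ((ρ ⊗ₘ κ).rnDeriv (ρ ⊗ₘ η) x).toReal) ∂(ρ ⊗ₘ η)
      = ∫⁻ x, ENNReal.ofReal (klFun (κ.rnDeriv η x.1 x.2).toReal) ∂(ρ ⊗ₘ η) := by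
    refine lintegral_congr_ae ?_
    filter_upwards [h2] with p hp
    rw [hp]
  rw [h3, Measure.lintegral_compProd (by fun_prop)]
  refine lintegral_mono_ae ?_
  filter_upwards [h_ac] with a ha
  rw [InformationTheory.klDiv_eq_lintegral_klFun_of_ac ha]
  refine (lintegral_congr_ae ?_).le
  filter_upwards [Kernel.rnDeriv_eq_rnDeriv_measure (κ := κ) (η := η) (a := a)] with b hb
  rw [hb]

lemma aux_kl_map {α β : Type*} [MeasurableSpace α] [MeasurableSpace β] (P Q : Measure α)
    [IsFiniteMeasure P] [IsFiniteMeasure Q] (g : α → β) (h : β → α) (hg : Measurable g)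
    (hh : Measurable h) (hl : ∀ x, h (g x) = x) :
    InformationTheory.klDiv (P.map g) (Q.map g) = InformationTheory.klDiv P Q := by
  refine le_antisymm (InformationTheory.klDiv_map_le P Q hg) ?_
  have := InformationTheory.klDiv_map_le (P.map g) (Q.map g) hh
  rw [Measure.map_map hh hg, Measure.map_map hh hg] at this
  have e : h ∘ g = id := funext hl
  simpa [e] using this

lemma aux_kl_eq {α : Type*} [MeasurableSpace α] (P Q : Measure α)
    [IsProbabilityMeasure P] [IsProbabilityMeasure Q] :
    klDiv P Q = InformationTheory.klDiv P Q := by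
  rw [klDiv]
  split_ifs with h
  · rw [InformationTheory.klDiv_of_ac_of_integrable h.1 h.2]; simp
  · by_contra hne
    exact h (InformationTheory.klDiv_ne_top_iff.1 (fun h' => hne h'.symm))

lemma aux_glue {𝓧 𝓨 𝓢 : Type*} [MeasurableSpace 𝓧] [MeasurableSpace 𝓨] [MeasurableSpace 𝓢]
    (ρ : Measure 𝓧) [IsProbabilityMeasure ρ] (ψ : 𝓧 → 𝓨) (hψ : Measurable ψ)
    (τ : Kernel 𝓨 𝓧) [IsMarkovKernel τ] (hτ : ρ.map ψ ⊗ₘ τ = ρ.map (fun x => (ψ x, x)))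
    (θ : Kernel 𝓨 𝓢) [IsMarkovKernel θ] :
    (ρ.map ψ ⊗ₘ θ) ⊗ₘ (τ.comap Prod.fst measurable_fst) =
      (ρ ⊗ₘ (θ.comap ψ hψ)).map (fun p => ((ψ p.1, p.2), p.1)) := by
  have : IsProbabilityMeasure (ρ.map ψ) := Measure.isProbabilityMeasure_map hψ.aemeasurable
  refine Measure.ext_of_lintegral _ fun f hf => ?_
  rw [Measure.lintegral_compProd hf, Measure.lintegral_compProd (by fun_prop),
    lintegral_map hf (by fun_prop), Measure.lintegral_compProd (by fun_prop)]
  simp only [Kernel.comap_apply]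
  have h1 : ∀ y, ∫⁻ s, ∫⁻ x, f ((y, s), x) ∂(τ y) ∂(θ y)
      = ∫⁻ x, ∫⁻ s, f ((y, s), x) ∂(θ y) ∂(τ y) := fun y =>
    lintegral_lintegral_swap (by fun_prop)
  simp_rw [h1]
  have hmeas : Measurable (fun p : 𝓨 × 𝓧 => ∫⁻ s, f ((p.1, s), p.2) ∂(θ p.1)) := by
    have : Measurable (fun q : (𝓨 × 𝓧) × 𝓢 => f ((q.1.1, q.2), q.1.2)) := by fun_prop
    exact Measurable.lintegral_kernel_prod_right'
      (κ := θ.comap Prod.fst measurable_fst) this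
  have h2 := Measure.lintegral_compProd (μ := ρ.map ψ) (κ := τ) hmeas
  rw [hτ, lintegral_map hmeas (by fun_prop)] at h2
  exact h2.symm

lemma aux_key {Ω 𝓦 𝓢 : Type*} [MeasurableSpace Ω] [MeasurableSpace 𝓦] [MeasurableSpace 𝓢]
    (μ : Measure Ω) [IsProbabilityMeasure μ] (S : Ω → 𝓢) (hS : Measurable S)
    (W : Ω → 𝓦) (hW : Measurable W) :
    mutualInfo μ S W = InformationTheory.klDiv (μ.map (fun ω => (W ω, S ω)))
        ((μ.map W).prod (μ.map S)) := by
  have q1 : IsProbabilityMeasure (μ.map W) := Measure.isProbabilityMeasure_map hW.aemeasurable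
  have q3 : IsProbabilityMeasure (μ.map S) := Measure.isProbabilityMeasure_map hS.aemeasurable
  have q2 : IsProbabilityMeasure (μ.map (fun ω => (S ω, W ω))) :=
    Measure.isProbabilityMeasure_map (by fun_prop)
  rw [mutualInfo, aux_kl_eq, ← aux_kl_map _ _ Prod.swap Prod.swap measurable_swap measurable_swap
    (fun _ => rfl), Measure.map_map measurable_swap (by fun_prop), Measure.prod_swap]
  rfl

lemma aux_chain {Ω 𝓧 𝓨 𝓢 : Type*} [MeasurableSpace Ω] [MeasurableSpace 𝓧]
    [StandardBorelSpace 𝓧] [Nonempty 𝓧] [MeasurableSpace 𝓨]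
    [MeasurableSpace 𝓢] [StandardBorelSpace 𝓢] [Nonempty 𝓢]
    (μ : Measure Ω) [IsProbabilityMeasure μ] (X : Ω → 𝓧) (S : Ω → 𝓢) (hX : Measurable X)
    (hS : Measurable S) (ψ : 𝓧 → 𝓨) (hψ : Measurable ψ) :
    mutualInfo μ S X = mutualInfo μ S (fun ω => ψ (X ω)) +
      InformationTheory.klDiv (μ.map X ⊗ₘ condDistrib S X μ)
        (μ.map X ⊗ₘ (condDistrib S (fun ω => ψ (X ω)) μ).comap ψ hψ) := by
  set Y : Ω → 𝓨 := fun ω => ψ (X ω) with hY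
  have mY : Measurable Y := hψ.comp hX
  have p1 : IsProbabilityMeasure (μ.map X) := Measure.isProbabilityMeasure_map hX.aemeasurable
  have p2 : IsProbabilityMeasure (μ.map Y) := Measure.isProbabilityMeasure_map mY.aemeasurable
  have p3 : IsProbabilityMeasure (μ.map S) := Measure.isProbabilityMeasure_map hS.aemeasurable
  have hρ : (μ.map X).map ψ = μ.map Y := Measure.map_map hψ hX
  have hτ : (μ.map X).map ψ ⊗ₘ condDistrib X Y μ = (μ.map X).map (fun x => (ψ x, x)) := by
    rw [hρ, compProd_map_condDistrib hX.aemeasurable, Measure.map_map (by fun_prop) hX]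
    rfl
  have g1 := aux_glue (μ.map X) ψ hψ (condDistrib X Y μ) hτ (Kernel.const 𝓨 (μ.map S))
  have g2 := aux_glue (μ.map X) ψ hψ (condDistrib X Y μ) hτ (condDistrib S Y μ)
  have p4 : IsProbabilityMeasure (μ.map (fun ω => (Y ω, S ω))) :=
    Measure.isProbabilityMeasure_map (by fun_prop)
  have p5 : IsProbabilityMeasure (μ.map (fun ω => (X ω, S ω))) :=
    Measure.isProbabilityMeasure_map (by fun_prop)
  have hj : μ.map (fun ω => (Y ω, S ω)) ⊗ₘ condDistrib X (fun ω => (Y ω, S ω)) μ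
      = (μ.map (fun ω => (X ω, S ω))).map (fun p => ((ψ p.1, p.2), p.1)) := by
    rw [compProd_map_condDistrib hX.aemeasurable, Measure.map_map (by fun_prop) (by fun_prop)]
    rfl
  rw [hρ, Measure.compProd_const] at g1
  rw [hρ, compProd_map_condDistrib hS.aemeasurable] at g2
  have hc : (Kernel.const 𝓨 (μ.map S)).comap ψ hψ = Kernel.const 𝓧 (μ.map S) := by
    ext x; rfl
  rw [hc, Measure.compProd_const] at g1
  have chain := InformationTheory.klDiv_compProd_eq_add (μ.map (fun ω => (Y ω, S ω)))
    ((μ.map Y).prod (μ.map S)) (condDistrib X (fun ω => (Y ω, S ω)) μ)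
    ((condDistrib X Y μ).comap Prod.fst measurable_fst)
  have hgm : Measurable (fun p : 𝓧 × 𝓢 => ((ψ p.1, p.2), p.1)) := by fun_prop
  have hhm : Measurable (fun p : (𝓨 × 𝓢) × 𝓧 => (p.2, p.1.2)) := by fun_prop
  rw [g1, g2, hj, aux_kl_map _ _ _ _ hgm hhm (fun _ => rfl),
    aux_kl_map _ _ _ _ hgm hhm (fun _ => rfl)] at chain
  rw [aux_key μ S hS X hX, aux_key μ S hS Y mY, chain, compProd_map_condDistrib hS.aemeasurable]

/-- Information loss lower-bounds transition error: with `Z := φ(S)` and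
`MI(S'; (S,O)) < ∞`, the mutual information gap upper-bounds (up to the Pinsker constant `1/2`
for natural-logarithm KL) the expected squared total-variation error of the abstracted
transition dynamics:
`MI(S'; (S,O)) − MI(S'; (Z,O)) ≥ (1/2) ∫ ‖κ_{(s,o)} − κ̃_{(φ(s),o)}‖₁² dμ_{(S,O)}(s,o)`. -/
theorem information_loss_ge_expected_sq_tv
    {Ω 𝒮 𝒵 O : Type*} [MeasurableSpace Ω]
    [MeasurableSpace 𝒮] [StandardBorelSpace 𝒮] [Nonempty 𝒮]
    [MeasurableSpace 𝒵] [StandardBorelSpace 𝒵] [Nonempty 𝒵]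
    [Fintype O] [MeasurableSpace O] [DiscreteMeasurableSpace O] [Nonempty O]
    (μ : Measure Ω) [IsProbabilityMeasure μ]
    (St : Ω → 𝒮) (Op : Ω → O) (S' : Ω → 𝒮)
    (hSt : Measurable St) (hOp : Measurable Op) (hS' : Measurable S')
    (φ : 𝒮 → 𝒵) (hφ : Measurable φ)
    (hfin : mutualInfo μ S' (fun ω => (St ω, Op ω)) < ∞) :
    mutualInfo μ S' (fun ω => (St ω, Op ω)) -
        mutualInfo μ S' (fun ω => (φ (St ω), Op ω)) ≥
      (1 / 2) *
        ∫⁻ p, ENNReal.ofReal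
            (tvDist (condDistrib S' (fun ω => (St ω, Op ω)) μ p)
                (condDistrib S' (fun ω => (φ (St ω), Op ω)) μ (φ p.1, p.2)) ^ 2)
          ∂(μ.map (fun ω => (St ω, Op ω))) := by
  have hψ : Measurable (fun p : 𝒮 × O => (φ p.1, p.2)) := by fun_prop
  have hX : Measurable (fun ω => (St ω, Op ω)) := by fun_prop
  have p1 : IsProbabilityMeasure (μ.map (fun ω => (St ω, Op ω))) :=
    Measure.isProbabilityMeasure_map hX.aemeasurable
  have chain := aux_chain μ (fun ω => (St ω, Op ω)) S' hX hS' _ hψ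
  simp only at chain
  have hne : mutualInfo μ S' (fun ω => (φ (St ω), Op ω)) ≠ ∞ := by
    intro h
    rw [chain, h] at hfin
    simp at hfin
  rw [ge_iff_le, chain, ENNReal.add_sub_cancel_left hne]
  refine le_trans ?_ (aux_kl_compProd _ _ _)
  rw [← lintegral_const_mul' _ _ (by simp)]
  refine lintegral_mono fun p => ?_
  exact aux_pinsker _ _
end
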